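/- Large-radius fall-off of the Abbott–Deser charge density: Let s = ±2 and let ψ(r,z) be a smooth complex-valued function on {r > r₊, −1 ≤ z ≤ 1} with 𝒯_s ψ = 0, satisfying ψ(r,z) = Φ₀(z)r^{−1} + O(r^{−2}) (if s = −2), respectively ψ(r,z) = Φ₀(z)r^{−5} + O(r^{−6}) (if s = +2), as r → ∞ uniformly in z, where Φ₀ is smooth on [−1,1], with the corresponding fall-off (one additional inverse power of r per r-derivative) holding for all partial derivatives of ψ up to third order. Set ℱ[k] := Σ·F^{rt}[h^{CCK}[s,ψ], k]. Then for every Killing vector k = x∂_t + y∂_φ, ℱ[k](r,z) = O(r^{−1}) as r → ∞ uniformly in z, and consequently Q[h^{CCK}[s,ψ], k, S_{t,r}] → 0 as r → ∞. -/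

import Mathlib

noncomputable section

open ComplexConjugate Filter

namespace Kerr

/-- A point of the Boyer-Lindquist-type coordinate chart `(t, r, z, φ)`. -/
abbrev Pt := Fin 4 → ℝ

/-- Partial derivative of a real-valued function on the chart. -/
def pd (i : Fin 4) (f : Pt → ℝ) (p : Pt) : ℝ :=
  fderiv ℝ f p (Pi.single i 1)

/-- Partial derivative of a complex-valued function on the chart. -/
def pdC (i : Fin 4) (f : Pt → ℂ) (p : Pt) : ℂ :=
  fderiv ℝ f p (Pi.single i 1)

/-- `Δ := r(r−2M)+a²` for the Kerr black hole with `M = 1`. -/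
def Del (a r : ℝ) : ℝ := r * (r - 2) + a ^ 2

/-- `Σ := r² + a²z²`. -/
def Sig (a r z : ℝ) : ℝ := r ^ 2 + a ^ 2 * z ^ 2

/-- Outer horizon radius `r₊ = 1 + √(1−a²)` (with `M = 1`). -/
def rplus (a : ℝ) : ℝ := 1 + Real.sqrt (1 - a ^ 2)

/-- Inner horizon radius `r₋ = 1 − √(1−a²)` (with `M = 1`). -/
def rminus (a : ℝ) : ℝ := 1 - Real.sqrt (1 - a ^ 2)

/-- The Kerr family of metrics, parametrized by mass `M` and angular momentum `J` (`a = J/M`),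
in Boyer-Lindquist-type coordinates `(t,r,z,φ)`. -/
def gFam (M J : ℝ) (p : Pt) : Matrix (Fin 4) (Fin 4) ℝ :=
  Matrix.of
    ![![-(1 - 2 * M * p 1 / (p 1 ^ 2 + (J / M) ^ 2 * p 2 ^ 2)), 0, 0,
        -(2 * M * (J / M) * p 1 * (1 - p 2 ^ 2) / (p 1 ^ 2 + (J / M) ^ 2 * p 2 ^ 2))],
      ![0, (p 1 ^ 2 + (J / M) ^ 2 * p 2 ^ 2) / (p 1 ^ 2 - 2 * M * p 1 + (J / M) ^ 2), 0, 0],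
      ![0, 0, (p 1 ^ 2 + (J / M) ^ 2 * p 2 ^ 2) / (1 - p 2 ^ 2), 0],
      ![-(2 * M * (J / M) * p 1 * (1 - p 2 ^ 2) / (p 1 ^ 2 + (J / M) ^ 2 * p 2 ^ 2)), 0, 0,
        (1 - p 2 ^ 2) / (p 1 ^ 2 + (J / M) ^ 2 * p 2 ^ 2) *
          (2 * (J / M) ^ 2 * M * p 1 * (1 - p 2 ^ 2)
            + ((J / M) ^ 2 + p 1 ^ 2) * (p 1 ^ 2 + (J / M) ^ 2 * p 2 ^ 2))]]

/-- The background Kerr metric with `M = 1` and spin `a`. -/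
def g (a : ℝ) : Pt → Matrix (Fin 4) (Fin 4) ℝ := gFam 1 a

/-- Inverse Kerr metric. -/
def gInv (a : ℝ) (p : Pt) : Matrix (Fin 4) (Fin 4) ℝ := (g a p)⁻¹

/-- Christoffel symbols `Γ^l_{m n}` of the Kerr metric. -/
def Chr (a : ℝ) (l m n : Fin 4) (p : Pt) : ℝ :=
  (1 / 2) * ∑ s : Fin 4, gInv a p l s *
    (pd m (fun q => g a q s n) p + pd n (fun q => g a q s m) p - pd s (fun q => g a q m n) p)

/-- Covariant derivative `(∇_c h)_{α β}` of a covariant 2-tensor field. -/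
def covD2 (a : ℝ) (h : Pt → Matrix (Fin 4) (Fin 4) ℝ) (c α β : Fin 4) (p : Pt) : ℝ :=
  pd c (fun q => h q α β) p
    - ∑ s : Fin 4, Chr a s c α p * h p s β
    - ∑ s : Fin 4, Chr a s c β p * h p α s

/-- Covariant derivative `(∇_c T)_{α β γ}` of a covariant 3-tensor field. -/
def covD3 (a : ℝ) (T : Fin 4 → Fin 4 → Fin 4 → Pt → ℝ) (c α β γ : Fin 4) (p : Pt) : ℝ :=
  pd c (fun q => T α β γ q) p
    - ∑ s : Fin 4, Chr a s c α p * T s β γ p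
    - ∑ s : Fin 4, Chr a s c β p * T α s γ p
    - ∑ s : Fin 4, Chr a s c γ p * T α β s p

/-- The Killing vector `k = x ∂_t + y ∂_φ` of the Kerr background. -/
def kvec (x y : ℝ) : Fin 4 → ℝ := ![x, 0, 0, y]

/-- The lowered Killing covector `k_α`. -/
def kco (a x y : ℝ) (p : Pt) (α : Fin 4) : ℝ := ∑ s : Fin 4, g a p α s * kvec x y s

/-- `∇_β k^λ` for the Killing vector `k = x ∂_t + y ∂_φ`. -/
def covDk (a x y : ℝ) (β l : Fin 4) (p : Pt) : ℝ :=
  pd β (fun _ => kvec x y l) p + ∑ s : Fin 4, Chr a l β s p * kvec x y s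

/-- Trace-reversed metric perturbation `h̄_{αβ} = h_{αβ} − ½ g_{αβ} g^{λσ} h_{λσ}`. -/
def trRev (a : ℝ) (h : Pt → Matrix (Fin 4) (Fin 4) ℝ) (p : Pt) : Matrix (Fin 4) (Fin 4) ℝ :=
  Matrix.of fun α β =>
    h p α β - (1 / 2) * g a p α β * ∑ l : Fin 4, ∑ s : Fin 4, gInv a p l s * h p l s

/-- Abbott–Deser 2-form `F_{αβ}[h, k]` (lowered indices) for the Killing vector
`k = x ∂_t + y ∂_φ`. -/
def ADform (a : ℝ) (h : Pt → Matrix (Fin 4) (Fin 4) ℝ) (x y : ℝ) (α β : Fin 4) (p : Pt) : ℝ :=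
  (1 / (8 * Real.pi)) *
    ((1 / 2) * (∑ l : Fin 4, kvec x y l *
        (covD2 a (trRev a h) α β l p - covD2 a (trRev a h) β α l p))
    + (1 / 2) * (∑ l : Fin 4,
        (trRev a h p l α * covDk a x y β l p - trRev a h p l β * covDk a x y α l p))
    - (1 / 2) *
        (kco a x y p α * ∑ l : Fin 4, ∑ s : Fin 4, gInv a p l s * covD2 a (trRev a h) s β l p
        - kco a x y p β * ∑ l : Fin 4, ∑ s : Fin 4, gInv a p l s * covD2 a (trRev a h) s α l p))

/-- Abbott–Deser 2-form with raised indices, `F^{αβ}[h,k]`. -/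
def ADformUp (a : ℝ) (h : Pt → Matrix (Fin 4) (Fin 4) ℝ) (x y : ℝ) (α β : Fin 4) (p : Pt) : ℝ :=
  ∑ m : Fin 4, ∑ n : Fin 4, gInv a p α m * gInv a p β n * ADform a h x y m n p

/-- The Abbott–Deser charge density `ℱ[k] := Σ F^{rt}[h,k]`. -/
def Fdens (a : ℝ) (h : Pt → Matrix (Fin 4) (Fin 4) ℝ) (x y : ℝ) (p : Pt) : ℝ :=
  Sig a (p 1) (p 2) * ADformUp a h x y 1 0 p

/-- The Abbott–Deser charge `Q[h, x∂_t + y∂_φ, S_{t,r}] = ∫₀^{2π}∫_{−1}^1 Σ F^{rt} dz dφ`. -/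
def ADcharge (a : ℝ) (h : Pt → Matrix (Fin 4) (Fin 4) ℝ) (x y t r : ℝ) : ℝ :=
  ∫ φ in (0:ℝ)..(2 * Real.pi), ∫ z in (-1:ℝ)..(1:ℝ),
    Sig a r z * ADformUp a h x y 1 0 ![t, r, z, φ]

/-! ### The Kinnersley tetrad and Newman-Penrose quantities -/

/-- The Newman–Penrose coefficient `ρ = −1/(r − i a z)`. -/
def rhoC (a : ℝ) (p : Pt) : ℂ := -1 / ((p 1 : ℂ) - Complex.I * (a : ℂ) * (p 2 : ℂ))

/-- Kinnersley tetrad leg `l^μ`. -/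
def lvec (a : ℝ) (p : Pt) : Fin 4 → ℂ := fun i =>
  ((![(p 1 ^ 2 + a ^ 2) / Del a (p 1), 1, 0, a / Del a (p 1)] : Fin 4 → ℝ) i : ℂ)

/-- Kinnersley tetrad leg `n^μ`. -/
def nvec (a : ℝ) (p : Pt) : Fin 4 → ℂ := fun i =>
  ((![(p 1 ^ 2 + a ^ 2) / (2 * Sig a (p 1) (p 2)), -Del a (p 1) / (2 * Sig a (p 1) (p 2)), 0,
      a / (2 * Sig a (p 1) (p 2))] : Fin 4 → ℝ) i : ℂ)

/-- Kinnersley tetrad leg `m^μ`. -/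
def mvec (a : ℝ) (p : Pt) : Fin 4 → ℂ := fun i =>
  (-(conj (rhoC a p)) * (Real.sqrt (1 - p 2 ^ 2) : ℂ) / (Real.sqrt 2 : ℂ)) *
    (![Complex.I * (a : ℂ), 0, -1, Complex.I / (1 - (p 2 : ℂ) ^ 2)] i)

/-- Kinnersley tetrad leg `m̄^μ`. -/
def mbvec (a : ℝ) (p : Pt) : Fin 4 → ℂ := fun i => conj (mvec a p i)

/-- Lowered tetrad covector `l_μ`. -/
def lco (a : ℝ) (p : Pt) (i : Fin 4) : ℂ := ∑ j : Fin 4, (g a p i j : ℂ) * lvec a p j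

/-- Lowered tetrad covector `n_μ`. -/
def nco (a : ℝ) (p : Pt) (i : Fin 4) : ℂ := ∑ j : Fin 4, (g a p i j : ℂ) * nvec a p j

/-- Lowered tetrad covector `m_μ`. -/
def mco (a : ℝ) (p : Pt) (i : Fin 4) : ℂ := ∑ j : Fin 4, (g a p i j : ℂ) * mvec a p j

/-- Lowered tetrad covector `m̄_μ`. -/
def mbco (a : ℝ) (p : Pt) (i : Fin 4) : ℂ := ∑ j : Fin 4, (g a p i j : ℂ) * mbvec a p j

/-- Newman–Penrose spin coefficient `μ = ρ²ρ̄Δ/2`. -/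
def muNP (a : ℝ) (p : Pt) : ℂ := rhoC a p ^ 2 * conj (rhoC a p) * (Del a (p 1) : ℂ) / 2

/-- Newman–Penrose spin coefficient `τ = −iaρρ̄√(1−z²)/√2`. -/
def tauNP (a : ℝ) (p : Pt) : ℂ :=
  -Complex.I * (a : ℂ) * rhoC a p * conj (rhoC a p) * (Real.sqrt (1 - p 2 ^ 2) : ℂ)
    / (Real.sqrt 2 : ℂ)

/-- Newman–Penrose spin coefficient `π = iaρ²√(1−z²)/√2`. -/
def piNP (a : ℝ) (p : Pt) : ℂ :=
  Complex.I * (a : ℂ) * rhoC a p ^ 2 * (Real.sqrt (1 - p 2 ^ 2) : ℂ) / (Real.sqrt 2 : ℂ)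

/-- Newman–Penrose spin coefficient `γ = μ + ρρ̄(r−1)/2`. -/
def gamNP (a : ℝ) (p : Pt) : ℂ :=
  muNP a p + rhoC a p * conj (rhoC a p) * ((p 1 : ℂ) - 1) / 2

/-- Newman–Penrose spin coefficient `β = −ρ̄z/(2√2√(1−z²))`. -/
def betNP (a : ℝ) (p : Pt) : ℂ :=
  -(conj (rhoC a p)) * (p 2 : ℂ) / (2 * (Real.sqrt 2 : ℂ) * (Real.sqrt (1 - p 2 ^ 2) : ℂ))

/-- Newman–Penrose spin coefficient `α = π − β̄`. -/
def alpNP (a : ℝ) (p : Pt) : ℂ := piNP a p - conj (betNP a p)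

/-- Directional derivative along a (complex) vector field. -/
def dirD (v : Pt → Fin 4 → ℂ) (f : Pt → ℂ) (p : Pt) : ℂ := ∑ i : Fin 4, v p i * pdC i f p

/-- First-order operator `(v^μ ∂_μ + c)` acting on complex scalars. -/
def opD (v : Pt → Fin 4 → ℂ) (c : Pt → ℂ) (f : Pt → ℂ) : Pt → ℂ :=
  fun p => dirD v f p + c p * f p

/-- The CCK operator `₊₂Ĥ_{μν}` applied to a Hertz potential `Φ`. -/
def Hplus (a : ℝ) (Φ : Pt → ℂ) (p : Pt) (i j : Fin 4) : ℂ :=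
  -(rhoC a p) ^ (-4 : ℤ) *
    (lco a p i * lco a p j *
        opD (mbvec a) (fun q => -3 * alpNP a q - conj (betNP a q) + 5 * piNP a q)
          (opD (mbvec a) (fun q => -4 * alpNP a q + piNP a q) Φ) p
    + mco a p i * mco a p j *
        opD (nvec a) (fun q => 5 * muNP a q - 3 * gamNP a q + conj (gamNP a q))
          (opD (nvec a) (fun q => muNP a q - 4 * gamNP a q) Φ) p
    - (1 / 2) * (lco a p i * mco a p j + lco a p j * mco a p i) *
        (opD (mbvec a)
            (fun q => -3 * alpNP a q + conj (betNP a q) + 5 * piNP a q + conj (tauNP a q))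
            (opD (nvec a) (fun q => muNP a q - 4 * gamNP a q) Φ) p
        + opD (nvec a)
            (fun q => 5 * muNP a q - conj (muNP a q) - 3 * gamNP a q - conj (gamNP a q))
            (opD (mbvec a) (fun q => -4 * alpNP a q + piNP a q) Φ) p))

/-- The CCK operator `₋₂Ĥ_{μν}` applied to a Hertz potential `Φ`. -/
def Hminus (a : ℝ) (Φ : Pt → ℂ) (p : Pt) (i j : Fin 4) : ℂ :=
  -(nco a p i * nco a p j *
        opD (mvec a) (fun q => conj (alpNP a q) + 3 * betNP a q - tauNP a q)
          (opD (mvec a) (fun q => 4 * betNP a q + 3 * tauNP a q) Φ) p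
    + mbco a p i * mbco a p j *
        opD (lvec a) (fun q => -(rhoC a q))
          (opD (lvec a) (fun q => 3 * rhoC a q) Φ) p
    - (1 / 2) * (nco a p i * mbco a p j + nco a p j * mbco a p i) *
        (opD (mvec a) (fun q => -2 * conj (alpNP a q) + 2 * betNP a q - tauNP a q)
            (opD (lvec a) (fun q => 3 * rhoC a q) Φ) p
        + opD (lvec a) (fun q => conj (rhoC a q) - rhoC a q)
            (opD (mvec a) (fun q => 4 * betNP a q + 3 * tauNP a q) Φ) p))

/-- `ₛĤ_{μν} Φ` for `s = ±2`. -/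
def Hop (a : ℝ) (s : ℤ) (Φ : Pt → ℂ) (p : Pt) (i j : Fin 4) : ℂ :=
  if s = 2 then Hplus a Φ p i j else Hminus a Φ p i j

/-- The CCK metric perturbation `h^{CCK}[s,Φ]_{μν} := ₛĤ_{μν}Φ + c.c.`. -/
def hCCK (a : ℝ) (s : ℤ) (Φ : Pt → ℂ) (p : Pt) : Matrix (Fin 4) (Fin 4) ℝ :=
  Matrix.of fun i j => (Hop a s Φ p i j + conj (Hop a s Φ p i j)).re

/-- The homogeneous spin-`s` Teukolsky operator on the Kerr exterior. -/
def Teuk (a : ℝ) (s : ℤ) (Φ : Pt → ℂ) (p : Pt) : ℂ :=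
  -((((p 1 : ℂ) ^ 2 + (a : ℂ) ^ 2) ^ 2 / (Del a (p 1) : ℂ)
      - (a : ℂ) ^ 2 * (1 - (p 2 : ℂ) ^ 2)) * pdC 0 (pdC 0 Φ) p)
  - (4 * (a : ℂ) * (p 1 : ℂ) / (Del a (p 1) : ℂ)) * pdC 0 (pdC 3 Φ) p
  - ((a : ℂ) ^ 2 / (Del a (p 1) : ℂ) - 1 / (1 - (p 2 : ℂ) ^ 2)) * pdC 3 (pdC 3 Φ) p
  + 2 * (s : ℂ) * (((p 1 : ℂ) ^ 2 - (a : ℂ) ^ 2) / (Del a (p 1) : ℂ) - (p 1 : ℂ)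
      - Complex.I * (a : ℂ) * (p 2 : ℂ)) * pdC 0 Φ p
  + 2 * (s : ℂ) * ((a : ℂ) * ((p 1 : ℂ) - 1) / (Del a (p 1) : ℂ)
      + Complex.I * (p 2 : ℂ) / (1 - (p 2 : ℂ) ^ 2)) * pdC 3 Φ p
  + (Del a (p 1) : ℂ) ^ (-s) *
      pdC 1 (fun q => (Del a (q 1) : ℂ) ^ (s + 1) * pdC 1 Φ q) p
  + pdC 2 (fun q => (1 - (q 2 : ℂ) ^ 2) * pdC 2 Φ q) p
  - (((s : ℂ) * ((s : ℂ) + 1) * (p 2 : ℂ) ^ 2 - (s : ℂ)) / (1 - (p 2 : ℂ) ^ 2)) * Φ p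

/-- The exterior Kerr coordinate patch `{r > r₊, −1 < z < 1}`. -/
def ext (a : ℝ) : Set Pt := {p | rplus a < p 1 ∧ -1 < p 2 ∧ p 2 < 1}

/-- The closed exterior patch `{r > r₊, −1 ≤ z ≤ 1}`. -/
def extCl (a : ℝ) : Set Pt := {p | rplus a < p 1 ∧ -1 ≤ p 2 ∧ p 2 ≤ 1}

/-- A Fourier mode Hertz potential `Φ(t,r,z,φ) = ψ(r,z) e^{i(mφ − ωt)}`. -/
def fourierMode (m : ℤ) (ω : ℝ) (ψ : ℝ → ℝ → ℂ) : Pt → ℂ :=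
  fun p => ψ (p 1) (p 2) * Complex.exp (Complex.I * ((m : ℂ) * (p 3 : ℂ) - (ω : ℂ) * (p 0 : ℂ)))

/-- The 2D domain `U = {(r,z) : r > r₊, −1 < z < 1}`. -/
def U2 (a : ℝ) : Set (ℝ × ℝ) := {q | rplus a < q.1 ∧ -1 < q.2 ∧ q.2 < 1}

/-- The closed 2D domain `{(r,z) : r > r₊, −1 ≤ z ≤ 1}`. -/
def U2cl (a : ℝ) : Set (ℝ × ℝ) := {q | rplus a < q.1 ∧ -1 ≤ q.2 ∧ q.2 ≤ 1}

/-- `∂_r` of a function of `(r, z)`. -/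
def pdr2 (f : ℝ → ℝ → ℂ) : ℝ → ℝ → ℂ := fun r z => deriv (fun r' => f r' z) r

/-- `∂_z` of a function of `(r, z)`. -/
def pdz2 (f : ℝ → ℝ → ℂ) : ℝ → ℝ → ℂ := fun r z => deriv (fun z' => f r z') z

/-- The stationary axisymmetric spin-`s` Teukolsky operator
`𝒯_s Φ := Δ^{−s}∂_r(Δ^{s+1}∂_rΦ) + ∂_z((1−z²)∂_zΦ) − ((s(s+1)z²−s)/(1−z²))Φ`. -/
def TeukSAS (a : ℝ) (s : ℤ) (ψ : ℝ → ℝ → ℂ) (r z : ℝ) : ℂ :=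
  (Del a r : ℂ) ^ (-s) *
      deriv (fun r' => (Del a r' : ℂ) ^ (s + 1) * deriv (fun r'' => ψ r'' z) r') r
    + deriv (fun z' => ((1 - z' ^ 2 : ℝ) : ℂ) * deriv (fun z'' => ψ r z'') z') z
    - (((s : ℂ) * ((s : ℂ) + 1) * (z : ℂ) ^ 2 - (s : ℂ)) / (1 - (z : ℂ) ^ 2)) * ψ r z


/-- The mass perturbation `h_M := ∂g^{Kerr}/∂M` at `M = 1`, `J = a`. -/
def hM (a : ℝ) (p : Pt) : Matrix (Fin 4) (Fin 4) ℝ :=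
  Matrix.of fun i j => deriv (fun M => gFam M a p i j) 1

/-- The angular-momentum perturbation `h_J := ∂g^{Kerr}/∂J` at `M = 1`, `J = a`. -/
def hJ (a : ℝ) (p : Pt) : Matrix (Fin 4) (Fin 4) ℝ :=
  Matrix.of fun i j => deriv (fun J => gFam 1 J p i j) a

/-- The eight-parameter family `Φ_Ker(c)` of stationary axisymmetric kernel elements
(`c 0, ..., c 7` correspond to `c₁, ..., c₈`). -/
def PhiKer (a : ℝ) (c : Fin 8 → ℂ) (r z : ℝ) : ℂ :=
  (1 - (z : ℂ) ^ 2)⁻¹ *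
    (c 0
    + c 1 * ((r : ℂ) - 1) * (z : ℂ)
    + c 2 * (z : ℂ) * ((z : ℂ) ^ 2 - 3)
    + c 3 * ((r : ℂ) + ((r : ℂ) - 1) * (z : ℂ) ^ 2)
    + c 4 * ((r : ℂ) ^ 2 - (a : ℂ) ^ 2) * (z : ℂ)
    + c 5 * (r : ℂ) * ((r : ℂ) * ((r : ℂ) - 3) + 3 * (a : ℂ) ^ 2)
    + c 6 * ((r : ℂ) ^ 2 + ((r : ℂ) ^ 2 - (a : ℂ) ^ 2) * (z : ℂ) ^ 2)
    + c 7 * (r : ℂ) * (z : ℂ) *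
        (((r : ℂ) * ((r : ℂ) - 3) + 3 * (a : ℂ) ^ 2) * (z : ℂ) ^ 2
          - 3 * ((r : ℂ) * ((r : ℂ) + 4) - 4 * (a : ℂ) ^ 2)))

/-- `G(z) = −4(1−a²)r₊z(1−z²)/(2z² + r₊(1−z²))²`. -/
def Gfun (a z : ℝ) : ℝ :=
  -4 * (1 - a ^ 2) * rplus a * z * (1 - z ^ 2) / (2 * z ^ 2 + rplus a * (1 - z ^ 2)) ^ 2

/-- Outward Abbott–Deser flux through the closed surface `C_ε⁺` around the segment
`r₁ ≤ r ≤ r₂` of the axis `z = 1`, in the slice `t = t₀`: two caps at `r = r₁, r₂`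
and the tube at `z = 1 − ε`. -/
def axisFluxP (a : ℝ) (h : Pt → Matrix (Fin 4) (Fin 4) ℝ) (x y t r₁ r₂ ε : ℝ) : ℝ :=
  (∫ φ in (0:ℝ)..(2 * Real.pi), ∫ z in (1 - ε)..(1:ℝ),
      Sig a r₂ z * ADformUp a h x y 1 0 ![t, r₂, z, φ])
  - (∫ φ in (0:ℝ)..(2 * Real.pi), ∫ z in (1 - ε)..(1:ℝ),
      Sig a r₁ z * ADformUp a h x y 1 0 ![t, r₁, z, φ])
  - (∫ φ in (0:ℝ)..(2 * Real.pi), ∫ r in r₁..r₂,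
      Sig a r (1 - ε) * ADformUp a h x y 2 0 ![t, r, 1 - ε, φ])

/-- Outward Abbott–Deser flux through the closed surface `C_ε⁻` around the segment
`r₁ ≤ r ≤ r₂` of the axis `z = −1`. -/
def axisFluxM (a : ℝ) (h : Pt → Matrix (Fin 4) (Fin 4) ℝ) (x y t r₁ r₂ ε : ℝ) : ℝ :=
  (∫ φ in (0:ℝ)..(2 * Real.pi), ∫ z in (-1:ℝ)..(-1 + ε),
      Sig a r₂ z * ADformUp a h x y 1 0 ![t, r₂, z, φ])
  - (∫ φ in (0:ℝ)..(2 * Real.pi), ∫ z in (-1:ℝ)..(-1 + ε),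
      Sig a r₁ z * ADformUp a h x y 1 0 ![t, r₁, z, φ])
  + (∫ φ in (0:ℝ)..(2 * Real.pi), ∫ r in r₁..r₂,
      Sig a r (-1 + ε) * ADformUp a h x y 2 0 ![t, r, -1 + ε, φ])

/-- The statement that both limiting Abbott–Deser axis charges
`Q_axis^± [h, x∂_t + y∂_φ, r₁, r₂]` vanish. -/
def axisChargesVanish (a : ℝ) (h : Pt → Matrix (Fin 4) (Fin 4) ℝ) : Prop :=
  ∀ x y t r₁ r₂ : ℝ, rplus a < r₁ → r₁ < r₂ →
    Tendsto (fun ε => axisFluxP a h x y t r₁ r₂ ε) (nhdsWithin 0 (Set.Ioi 0)) (nhds 0) ∧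
    Tendsto (fun ε => axisFluxM a h x y t r₁ r₂ ε) (nhdsWithin 0 (Set.Ioi 0)) (nhds 0)

/-- Covariant Hessian `∇_α ∇_β f` of a scalar field. -/
def hess (a : ℝ) (f : Pt → ℝ) (α β : Fin 4) (p : Pt) : ℝ :=
  pd α (fun q => pd β f q) p - ∑ s : Fin 4, Chr a s α β p * pd s f p

/-- The linearized Ricci tensor
`δR_{αβ}[h] = −½∇^λ∇_λ h_{αβ} − ½∇_α∇_β(g^{λσ}h_{λσ}) + ∇^λ∇_{(α}h_{β)λ}`. -/
def linRicci (a : ℝ) (h : Pt → Matrix (Fin 4) (Fin 4) ℝ) (α β : Fin 4) (p : Pt) : ℝ :=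
  -(1 / 2) * (∑ l : Fin 4, ∑ s : Fin 4, gInv a p l s * covD3 a (covD2 a h) l s α β p)
  - (1 / 2) * hess a (fun q => ∑ l : Fin 4, ∑ s : Fin 4, gInv a q l s * h q l s) α β p
  + (1 / 2) * ((∑ l : Fin 4, ∑ s : Fin 4, gInv a p l s * covD3 a (covD2 a h) s α β l p)
      + (∑ l : Fin 4, ∑ s : Fin 4, gInv a p l s * covD3 a (covD2 a h) s β α l p))

/-!
The proof is a count of powers of `r` and of `sin θ` as `r → ∞`. A symbol is a function of `(r, z)`
bounded by `r^p sin^e θ` such that every `∂_r` gains a power of `1/r` and every `∂_z` costs at most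
`sin² θ`, the size of `1 - z²`. Symbols are closed under sums, products, and inverses of functions
bounded below, so the weights of the metric, its Christoffel symbols, the tetrad and the spin
coefficients can all be read off from their formulas. Such a count takes a Hertz potential of size
`r⁻¹` (`s = -2`) or `r⁻⁵` (`s = 2`) to a metric perturbation whose orthonormal components are of
size `r⁻³`, and hence to a charge density of size `r⁻¹`.

Uniformity up to the axis needs more, since the tetrad and the CCK operators are singular at
`sin θ = 0`. There the Teukolsky equation helps: multiplied by `1 - z²`, its angular potential is
`s² - s(s+1)(1 - z²)`, so the equation reads `s² ψ = (1 - z²) χ`, with `χ` made of derivatives of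
`ψ` up to second order and thus as large as `ψ`. The factor `sin² θ` gained by `ψ` compensates the
singular coefficients.
-/

open Asymptotics Topology

/-! ### Weighted bounds at large radius -/

/-- The filter of points with `r → ∞`, uniformly in `t`, in `φ` and in the open polar range
`-1 < z < 1`. -/
def farField : Filter Pt := comap (fun P => P 1) atTop ⊓ 𝓟 {P | P 2 ∈ Set.Ioo (-1 : ℝ) 1}

/-- `sin θ = √(1 - z²)`. -/
def sinTheta (P : Pt) : ℝ := √(1 - P 2 ^ 2)

theorem eventually_farField {p : Pt → Prop} :
    (∀ᶠ P in farField, p P) ↔ ∃ R, ∀ P : Pt, R < P 1 → P 2 ∈ Set.Ioo (-1 : ℝ) 1 → p P := by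
  simp only [farField, ((atTop_basis_Ioi.comap _).inf_principal _).eventually_iff, true_and,
    Set.mem_inter_iff, Set.mem_preimage, Set.mem_Ioi, Set.mem_ofPred_eq, and_imp]

theorem eventually_radius_gt (R : ℝ) : ∀ᶠ P in farField, R < P 1 :=
  eventually_farField.2 ⟨R, fun _ h _ => h⟩

theorem eventually_cosTheta_mem_Ioo : ∀ᶠ P in farField, P 2 ∈ Set.Ioo (-1 : ℝ) 1 :=
  eventually_farField.2 ⟨0, fun _ _ h => h⟩

theorem eventually_eventually_nhds_farField {p : Pt → Prop} (h : ∀ᶠ P in farField, p P) :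
    ∀ᶠ P in farField, ∀ᶠ Q in 𝓝 P, p Q := by
  obtain ⟨R, hR⟩ := eventually_farField.1 h
  refine eventually_farField.2 ⟨R, fun P hP hz => ?_⟩
  filter_upwards [(continuous_apply 1).continuousAt.eventually_mem (Ioi_mem_nhds hP),
    (continuous_apply 2).continuousAt.eventually_mem (Ioo_mem_nhds hz.1 hz.2)] with Q using hR Q

theorem sinTheta_le_one (P : Pt) : sinTheta P ≤ 1 :=
  Real.sqrt_le_one.2 (sub_le_self _ (sq_nonneg _))

theorem one_sub_sq_pos {z : ℝ} (hz : z ∈ Set.Ioo (-1 : ℝ) 1) : 0 < 1 - z ^ 2 := by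
  nlinarith [hz.1, hz.2]

theorem sinTheta_pos {P : Pt} (hz : P 2 ∈ Set.Ioo (-1 : ℝ) 1) : 0 < sinTheta P :=
  Real.sqrt_pos.2 (one_sub_sq_pos hz)

theorem sinTheta_sq {P : Pt} (hz : P 2 ∈ Set.Ioo (-1 : ℝ) 1) : sinTheta P ^ 2 = 1 - P 2 ^ 2 :=
  Real.sq_sqrt (one_sub_sq_pos hz).le

section HasWeight

variable {E : Type*} [NormedAddCommGroup E] {p p' e e' : ℤ} {f : Pt → E}

/-- `f = O(r^p sin^e θ)` at large radius. -/
abbrev HasWeight (p e : ℤ) (f : Pt → E) : Prop :=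
  f =O[farField] fun P => P 1 ^ p * sinTheta P ^ e

theorem HasWeight.mono (hf : HasWeight p e f) (hp : p ≤ p') (he : e' ≤ e) :
    HasWeight p' e' f := by
  refine hf.trans (.of_bound' ?_)
  filter_upwards [eventually_radius_gt 1, eventually_cosTheta_mem_Ioo] with P hr hz
  have hw := sinTheta_pos hz
  have : 0 < P 1 := zero_lt_one.trans hr
  rw [Real.norm_of_nonneg (by positivity), Real.norm_of_nonneg (by positivity)]
  exact mul_le_mul (zpow_le_zpow_right₀ hr.le hp)
    (zpow_le_zpow_right_of_le_one₀ hw (sinTheta_le_one P) he) (by positivity) (by positivity)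

theorem hasWeight_const (c : E) : HasWeight 0 0 fun _ : Pt => c :=
  (isBigO_const_const c (one_ne_zero (α := ℝ)) _).congr_right fun P => by simp

theorem HasWeight.mul {E : Type*} [NormedRing E] {f g : Pt → E} {p'' e'' : ℤ}
    (hf : HasWeight p e f) (hg : HasWeight p' e' g)
    (hp : p + p' ≤ p'' := by norm_num) (he : e'' ≤ e + e' := by norm_num) :
    HasWeight p'' e'' fun P => f P * g P := by
  refine HasWeight.mono (p := p + p') (e := e + e') ((IsBigO.mul hf hg).congr' .rfl ?_) hp he
  filter_upwards [eventually_radius_gt 0, eventually_cosTheta_mem_Ioo] with P hr hz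
  rw [zpow_add₀ hr.ne', zpow_add₀ (sinTheta_pos hz).ne']
  ring

theorem hasWeight_sum {ι : Type*} {s : Finset ι} {f : ι → Pt → E}
    (h : ∀ i ∈ s, HasWeight p e (f i)) : HasWeight p e fun P => ∑ i ∈ s, f i P := by
  simpa only [← Finset.sum_apply] using IsBigO.sum h

end HasWeight

/-! ### The symbol calculus -/

/-- The covector `u dr + v dz`. -/
def drdz {E : Type*} [NormedAddCommGroup E] [NormedSpace ℝ E] (u v : E) : Pt →L[ℝ] E :=
  (ContinuousLinearMap.proj 1).smulRight u + (ContinuousLinearMap.proj 2).smulRight v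

/-- `f` is stationary and axisymmetric with weighted bounds on its derivatives up to order `k`:
`f = O(r^p sin^(q 0) θ)`, each `∂_r` lowers the power of `r` by one and shifts the sequence `q`
of powers of `sin θ`, and each `∂_z` costs `sin^c θ`. -/
def IsGradedSymbol {E : Type*} [NormedAddCommGroup E] [NormedSpace ℝ E] (c : ℕ) :
    ℕ → ℤ → (ℕ → ℤ) → (Pt → E) → Prop
  | 0, p, q, f => HasWeight p (q 0) f
  | k + 1, p, q, f => HasWeight p (q 0) f ∧ ∃ f₁ f₂ : Pt → E,
      (∀ᶠ P in farField, HasFDerivAt f (drdz (f₁ P) (f₂ P)) P) ∧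
      IsGradedSymbol c k (p - 1) (fun i => q (i + 1)) f₁ ∧
      IsGradedSymbol c k p (fun i => q i - c) f₂

/-- A graded symbol whose powers of `sin θ` form a constant sequence. -/
abbrev IsSymbol {E : Type*} [NormedAddCommGroup E] [NormedSpace ℝ E] (c k : ℕ) (p e : ℤ)
    (f : Pt → E) : Prop :=
  IsGradedSymbol c k p (fun _ => e) f

section Linear

variable {E F : Type*} [NormedAddCommGroup E] [NormedSpace ℝ E] [NormedAddCommGroup F]
  [NormedSpace ℝ F] {c k l : ℕ} {p p' e e' : ℤ} {q q' : ℕ → ℤ} {f g : Pt → E}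

namespace IsGradedSymbol

theorem hasWeight (h : IsGradedSymbol c k p q f) : HasWeight p (q 0) f := by
  cases k with
  | zero => exact h
  | succ k => exact h.1

theorem congr (h : IsGradedSymbol c k p q f) (hfg : g =ᶠ[farField] f) :
    IsGradedSymbol c k p q g := by
  cases k with
  | zero => exact h.congr' hfg.symm .rfl
  | succ k =>
    obtain ⟨h₀, f₁, f₂, hf, h₁, h₂⟩ := h
    refine ⟨h₀.congr' hfg.symm .rfl, f₁, f₂, ?_, h₁, h₂⟩
    filter_upwards [hf, eventually_eventually_nhds_farField hfg] with P hf hfg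
      using hf.congr_of_eventuallyEq hfg

theorem mono (h : IsGradedSymbol c k p q f) (hp : p ≤ p') (hq : ∀ i ≤ k, q' i ≤ q i) :
    IsGradedSymbol c k p' q' f := by
  induction k generalizing p p' q q' f with
  | zero => exact HasWeight.mono h hp (hq 0 le_rfl)
  | succ k ih =>
    obtain ⟨h₀, f₁, f₂, hf, h₁, h₂⟩ := h
    exact ⟨h₀.mono hp (hq 0 k.succ.zero_le), f₁, f₂, hf,
      ih h₁ (by lia) fun i hi => hq (i + 1) (by lia),
      ih h₂ hp fun i hi => sub_le_sub_right (hq i (by lia)) _⟩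

theorem of_le (h : IsGradedSymbol c l p q f) (hkl : k ≤ l) : IsGradedSymbol c k p q f := by
  induction k generalizing l p q f with
  | zero => exact h.hasWeight
  | succ k ih =>
    obtain ⟨l, rfl⟩ := Nat.exists_eq_add_one.2 (k.succ_pos.trans_le hkl)
    obtain ⟨h₀, f₁, f₂, hf, h₁, h₂⟩ := h
    exact ⟨h₀, f₁, f₂, hf, ih h₁ (by lia), ih h₂ (by lia)⟩

theorem of_succ (h : IsGradedSymbol c (k + 1) p q f) : IsGradedSymbol c k p q f :=
  h.of_le k.le_succ

theorem add (hf : IsGradedSymbol c k p q f) (hg : IsGradedSymbol c k p q g) :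
    IsGradedSymbol c k p q fun P => f P + g P := by
  induction k generalizing p q f g with
  | zero => exact IsBigO.add hf hg
  | succ k ih =>
    obtain ⟨h₀, f₁, f₂, hf, h₁, h₂⟩ := hf
    obtain ⟨h₀', g₁, g₂, hg, h₁', h₂'⟩ := hg
    refine ⟨h₀.add h₀', _, _, ?_, ih h₁ h₁', ih h₂ h₂'⟩
    filter_upwards [hf, hg] with P hf hg
    exact (hf.add hg).congr_fderiv (by ext; simp [drdz]; abel)

theorem clm_comp (L : E →L[ℝ] F) (hf : IsGradedSymbol c k p q f) :
    IsGradedSymbol c k p q fun P => L (f P) := by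
  induction k generalizing p q f with
  | zero => exact (L.isBigO_comp f _).trans hf
  | succ k ih =>
    obtain ⟨h₀, f₁, f₂, hf, h₁, h₂⟩ := hf
    refine ⟨(L.isBigO_comp f _).trans h₀, _, _, ?_, ih h₁, ih h₂⟩
    filter_upwards [hf] with P hf
    exact (L.hasFDerivAt.comp P hf).congr_fderiv (by ext; simp [drdz])

theorem neg (hf : IsGradedSymbol c k p q f) : IsGradedSymbol c k p q fun P => -f P :=
  hf.clm_comp (-ContinuousLinearMap.id ℝ E)

theorem sub (hf : IsGradedSymbol c k p q f) (hg : IsGradedSymbol c k p q g) :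
    IsGradedSymbol c k p q fun P => f P - g P := by
  simpa only [sub_eq_add_neg] using hf.add hg.neg

theorem ofReal {f : Pt → ℝ} (hf : IsGradedSymbol c k p q f) :
    IsGradedSymbol c k p q fun P => (f P : ℂ) :=
  hf.clm_comp Complex.ofRealCLM

theorem star {f : Pt → ℂ} (hf : IsGradedSymbol c k p q f) :
    IsGradedSymbol c k p q fun P => conj (f P) :=
  hf.clm_comp (Complex.conjCLE : ℂ →L[ℝ] ℂ)

theorem re {f : Pt → ℂ} (hf : IsGradedSymbol c k p q f) :
    IsGradedSymbol c k p q fun P => (f P).re :=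
  hf.clm_comp Complex.reCLM

end IsGradedSymbol

theorem IsSymbol.mono (hf : IsSymbol c k p e f) (hp : p ≤ p') (he : e' ≤ e) :
    IsSymbol c k p' e' f :=
  IsGradedSymbol.mono hf hp fun _ _ => he

theorem isGradedSymbol_zero : IsGradedSymbol c k p q fun _ => (0 : E) := by
  induction k generalizing p q with
  | zero => exact isBigO_zero _ _
  | succ k ih =>
    exact ⟨isBigO_zero _ _, _, _, .of_forall fun P =>
      (hasFDerivAt_const _ P).congr_fderiv (by ext; simp [drdz]), ih, ih⟩

theorem isSymbol_const (a : E) : IsSymbol c k 0 0 fun _ => a := by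
  cases k with
  | zero => exact hasWeight_const a
  | succ k =>
    exact ⟨hasWeight_const a, _, _, .of_forall fun P =>
      (hasFDerivAt_const _ P).congr_fderiv (by ext; simp [drdz]),
      isGradedSymbol_zero, isGradedSymbol_zero⟩

theorem isGradedSymbol_sum {ι : Type*} {s : Finset ι} {f : ι → Pt → E}
    (h : ∀ i ∈ s, IsGradedSymbol c k p q (f i)) :
    IsGradedSymbol c k p q fun P => ∑ i ∈ s, f i P := by
  classical
  induction s using Finset.induction_on with
  | empty => simpa using isGradedSymbol_zero
  | insert i s hi ih =>
    simp only [Finset.sum_insert hi]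
    exact (h i (s.mem_insert_self i)).add (ih fun j hj => h j (Finset.mem_insert_of_mem hj))

end Linear

section Multiplicative

variable {E : Type*} [NormedCommRing E] [NormedAlgebra ℝ E] {c k : ℕ} {p p' p'' : ℤ}
  {q q' : ℕ → ℤ} {e e' e'' : ℤ} {f g : Pt → E}

theorem IsGradedSymbol.const_mul (a : E) (hf : IsGradedSymbol c k p q f) :
    IsGradedSymbol c k p q fun P => a * f P :=
  hf.clm_comp (ContinuousLinearMap.mul ℝ E a)

theorem IsSymbol.mul_graded (hf : IsSymbol c k p e f) (hg : IsGradedSymbol c k p' q' g)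
    (hq' : Antitone q') (hp : p + p' ≤ p'' := by norm_num)
    (hq : ∀ i ≤ k, q i ≤ e + q' i := by norm_num) :
    IsGradedSymbol c k p'' q fun P => f P * g P := by
  induction k generalizing p p' p'' q' q e f g with
  | zero => exact HasWeight.mul hf hg hp (hq 0 le_rfl)
  | succ k ih =>
    have ⟨h₀, f₁, f₂, hdf, h₁, h₂⟩ := hf
    have ⟨h₀', g₁, g₂, hdg, h₁', h₂'⟩ := hg
    have hstep (i : ℕ) (hi : i ≤ k) : q (i + 1) ≤ e + q' (i + 1) := hq (i + 1) (by lia)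
    refine ⟨h₀.mul h₀' hp (hq 0 k.succ.zero_le), fun P => f P * g₁ P + f₁ P * g P,
      fun P => f P * g₂ P + f₂ P * g P, ?_, ?_, ?_⟩
    · filter_upwards [hdf, hdg] with P hdf hdg
      exact (hdf.mul hdg).congr_fderiv (by ext; simp [drdz, Algebra.smul_def]; ring)
    · refine (ih hf.of_succ h₁' (fun i j hij => hq' (by lia)) (by lia) hstep).add
        (ih h₁ hg.of_succ hq' (by lia) fun i hi => (hstep i hi).trans ?_)
      gcongr
      exact hq' i.le_succ
    · refine (ih hf.of_succ h₂' (fun i j hij => sub_le_sub_right (hq' hij) _) hp ?_).add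
        (ih h₂ hg.of_succ hq' hp ?_) <;>
      · intro i hi
        have := hq i (by lia)
        lia

theorem IsSymbol.mul (hf : IsSymbol c k p e f) (hg : IsSymbol c k p' e' g)
    (hp : p + p' ≤ p'' := by norm_num) (he : e'' ≤ e + e' := by norm_num) :
    IsSymbol c k p'' e'' fun P => f P * g P :=
  IsSymbol.mul_graded hf hg antitone_const hp fun _ _ => he

theorem IsSymbol.pow (hf : IsSymbol c k p e f) (m : ℕ) :
    IsSymbol c k (m * p) (m * e) fun P => f P ^ m := by
  induction m with
  | zero => simpa using isSymbol_const (1 : E)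
  | succ m ih =>
    simp only [pow_succ]
    exact ih.mul hf (by push_cast; linarith) (by push_cast; linarith)

theorem IsSymbol.inv {E : Type*} [NormedField E] [NormedAlgebra ℝ E] {f : Pt → E}
    (hf : IsSymbol c k p e f) (hlow : (fun P : Pt => P 1 ^ p * sinTheta P ^ e) =O[farField] f) :
    IsSymbol c k (-p) (-e) fun P => (f P)⁻¹ := by
  have hne : ∀ᶠ P in farField, f P ≠ 0 := by
    filter_upwards [hlow.eq_zero_imp, eventually_radius_gt 0, eventually_cosTheta_mem_Ioo]
      with P h hr hz h₀
    have := sinTheta_pos hz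
    exact absurd (h h₀) (by positivity)
  have hinv : HasWeight (-p) (-e) fun P => (f P)⁻¹ := by
    refine (hlow.inv_rev ?_).congr_right fun P => by simp only [zpow_neg, mul_inv]
    filter_upwards [eventually_radius_gt 0, eventually_cosTheta_mem_Ioo] with P hr hz h₀
    have := sinTheta_pos hz
    exact absurd h₀ (by positivity)
  induction k with
  | zero => exact hinv
  | succ k ih =>
    have ih := ih hf.of_succ
    obtain ⟨-, f₁, f₂, hdf, h₁, h₂⟩ := hf
    refine ⟨hinv, fun P => -(f₁ P * ((f P)⁻¹ * (f P)⁻¹)), fun P => -(f₂ P * ((f P)⁻¹ * (f P)⁻¹)),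
      ?_, ?_, ?_⟩
    · filter_upwards [hdf, hne] with P hdf hne
      refine ((hasFDerivAt_inv' (𝕜 := ℝ) hne).comp P hdf).congr_fderiv ?_
      ext
      simp [drdz, Algebra.smul_def]
      ring
    · exact (IsSymbol.mul h₁ (ih.mul ih le_rfl le_rfl) (by lia) (by lia)).neg
    · exact (IsSymbol.mul h₂ (ih.mul ih le_rfl le_rfl) (by lia) (by lia)).neg

end Multiplicative

section Coordinates

variable {c k : ℕ}

theorem hasFDerivAt_radius (P : Pt) : HasFDerivAt (fun P : Pt => P 1) (drdz 1 0 : Pt →L[ℝ] ℝ) P :=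
  (ContinuousLinearMap.proj (R := ℝ) (φ := fun _ : Fin 4 => ℝ) 1).hasFDerivAt.congr_fderiv
    (by ext; simp [drdz])

theorem hasFDerivAt_cosTheta (P : Pt) :
    HasFDerivAt (fun P : Pt => P 2) (drdz 0 1 : Pt →L[ℝ] ℝ) P :=
  (ContinuousLinearMap.proj (R := ℝ) (φ := fun _ : Fin 4 => ℝ) 2).hasFDerivAt.congr_fderiv
    (by ext; simp [drdz])

theorem isSymbol_radius : IsSymbol c k 1 0 fun P => P 1 := by
  have hr : HasWeight 1 0 fun P => P 1 := (isBigO_refl _ _).congr_right fun P => by simp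
  cases k with
  | zero => exact hr
  | succ k =>
    exact ⟨hr, _, _, .of_forall hasFDerivAt_radius, isSymbol_const 1, isGradedSymbol_zero⟩

theorem isSymbol_cosTheta : IsSymbol c k 0 0 fun P => P 2 := by
  have hz : HasWeight 0 0 fun P => P 2 := by
    refine .of_bound' ?_
    filter_upwards [eventually_cosTheta_mem_Ioo] with P hz
    simpa using abs_le.2 ⟨hz.1.le, hz.2.le⟩
  cases k with
  | zero => exact hz
  | succ k =>
    exact ⟨hz, _, _, .of_forall hasFDerivAt_cosTheta, isGradedSymbol_zero,
      (isSymbol_const 1).mono le_rfl (by simp)⟩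

theorem isSymbol_one_sub_sq : IsSymbol 2 k 0 2 fun P => 1 - P 2 ^ 2 := by
  have hw : HasWeight 0 2 fun P => 1 - P 2 ^ 2 := by
    refine (isBigO_refl _ _).congr' .rfl ?_
    filter_upwards [eventually_cosTheta_mem_Ioo] with P hz
    rw [zpow_zero, one_mul, zpow_ofNat, sinTheta_sq hz]
  cases k with
  | zero => exact hw
  | succ k =>
    exact ⟨hw, 0, fun P => -2 * P 2, .of_forall fun P =>
      (((hasFDerivAt_cosTheta P).pow 2).const_sub 1).congr_fderiv (by ext; simp [drdz]; ring),
      isGradedSymbol_zero, isSymbol_cosTheta.const_mul _⟩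

theorem hasFDerivAt_inv_sinTheta {P : Pt} (hz : P 2 ∈ Set.Ioo (-1 : ℝ) 1) :
    HasFDerivAt (fun P => (sinTheta P)⁻¹)
      (drdz 0 (P 2 * ((sinTheta P)⁻¹ * ((sinTheta P)⁻¹ * (sinTheta P)⁻¹)))) P := by
  have hw := (sinTheta_pos hz).ne'
  have hsqrt : HasFDerivAt sinTheta _ P :=
    (((hasFDerivAt_cosTheta P).pow 2).const_sub 1).sqrt (one_sub_sq_pos hz).ne'
  refine ((hasDerivAt_inv hw).comp_hasFDerivAt P hsqrt).congr_fderiv ?_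
  ext v
  rw [show √(1 - P 2 ^ 2) = sinTheta P from rfl]
  simp [drdz]
  field_simp

theorem isSymbol_inv_sinTheta : IsSymbol 2 k 0 (-1) fun P => (sinTheta P)⁻¹ := by
  have hw : HasWeight 0 (-1) fun P => (sinTheta P)⁻¹ :=
    (isBigO_refl _ _).congr_right fun P => by simp
  induction k with
  | zero => exact hw
  | succ k ih =>
    refine ⟨hw, _, _, eventually_cosTheta_mem_Ioo.mono fun P => hasFDerivAt_inv_sinTheta,
      isGradedSymbol_zero, ?_⟩
    exact isSymbol_cosTheta.mul (ih.mul (ih.mul ih le_rfl le_rfl) le_rfl le_rfl)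

theorem isSymbol_sinTheta : IsSymbol 2 k 0 1 sinTheta := by
  refine IsGradedSymbol.congr (isSymbol_one_sub_sq.mul isSymbol_inv_sinTheta) ?_
  filter_upwards [eventually_cosTheta_mem_Ioo] with P hz
  rw [← sinTheta_sq hz, sq, mul_inv_cancel_right₀ (sinTheta_pos hz).ne']

theorem isSymbol_inv_one_sub_sq : IsSymbol 2 k 0 (-2) fun P => (1 - P 2 ^ 2)⁻¹ := by
  refine IsGradedSymbol.congr (isSymbol_inv_sinTheta.mul isSymbol_inv_sinTheta) ?_
  filter_upwards [eventually_cosTheta_mem_Ioo] with P hz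
  rw [← sinTheta_sq hz, sq, mul_inv]

end Coordinates

/-! ### The Kerr metric as a symbol -/

section Metric

variable {c k : ℕ} (a : ℝ)

theorem half_sq_le_Del {r : ℝ} (hr : 4 ≤ r) : r ^ 2 / 2 ≤ Del a r := by
  unfold Del
  nlinarith [sq_nonneg a]

theorem Del_pos {r : ℝ} (hr : 2 < r) : 0 < Del a r := by
  unfold Del
  nlinarith [sq_nonneg a]

theorem sq_le_Sig (r z : ℝ) : r ^ 2 ≤ Sig a r z := by
  unfold Sig
  nlinarith [sq_nonneg (a * z)]

theorem Sig_pos {r : ℝ} (hr : 0 < r) (z : ℝ) : 0 < Sig a r z :=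
  (pow_pos hr 2).trans_le (sq_le_Sig a r z)

theorem isSymbol_Del : IsSymbol c k 2 0 fun P => Del a (P 1) := by
  unfold Del
  exact (isSymbol_radius.mul
    (isSymbol_radius.sub ((isSymbol_const 2).mono zero_le_one le_rfl))).add
    ((isSymbol_const (a ^ 2)).mono zero_le_two le_rfl)

theorem isSymbol_Sig : IsSymbol c k 2 0 fun P => Sig a (P 1) (P 2) := by
  unfold Sig
  exact (isSymbol_radius.pow 2).add
    (((isSymbol_cosTheta.pow 2).const_mul (a ^ 2)).mono (by norm_num) (by norm_num))

theorem isSymbol_inv_Del : IsSymbol c k (-2) 0 fun P => (Del a (P 1))⁻¹ := by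
  refine IsSymbol.inv (isSymbol_Del a) (.of_bound 2 ?_)
  filter_upwards [eventually_radius_gt 4] with P hr
  have := half_sq_le_Del a hr.le
  rw [zpow_zero, mul_one, zpow_ofNat, Real.norm_of_nonneg (sq_nonneg _)]
  linarith [Real.le_norm_self (Del a (P 1))]

theorem isSymbol_inv_Sig : IsSymbol c k (-2) 0 fun P => (Sig a (P 1) (P 2))⁻¹ := by
  refine IsSymbol.inv (isSymbol_Sig a) (.of_bound' (.of_forall fun P => ?_))
  rw [zpow_zero, mul_one, zpow_ofNat, Real.norm_of_nonneg (sq_nonneg _)]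
  exact (sq_le_Sig a _ _).trans (Real.le_norm_self _)

/-- The power of `r` carried by a lowered index: a covector of unit length has components
`O(r^(rWeight i) sin^(sinWeight i) θ)`. -/
def rWeight : Fin 4 → ℤ := ![0, 0, 1, 1]

/-- The power of `sin θ` carried by a lowered index. -/
def sinWeight : Fin 4 → ℤ := ![0, 0, -1, 1]

theorem rWeight_eq_zero_or_one (i : Fin 4) : rWeight i = 0 ∨ rWeight i = 1 := by
  revert i; decide

theorem g_eq (P : Pt) :
    g a P = !![
      -(1 - 2 * (P 1 * (Sig a (P 1) (P 2))⁻¹)), 0, 0,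
        -(2 * a) * (P 1 * ((1 - P 2 ^ 2) * (Sig a (P 1) (P 2))⁻¹));
      0, Sig a (P 1) (P 2) * (Del a (P 1))⁻¹, 0, 0;
      0, 0, Sig a (P 1) (P 2) * (1 - P 2 ^ 2)⁻¹, 0;
      -(2 * a) * (P 1 * ((1 - P 2 ^ 2) * (Sig a (P 1) (P 2))⁻¹)), 0, 0,
        (1 - P 2 ^ 2) * (Sig a (P 1) (P 2))⁻¹ *
          (2 * a ^ 2 * (P 1 * (1 - P 2 ^ 2)) + (a ^ 2 + P 1 ^ 2) * Sig a (P 1) (P 2))] := by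
  have hDel : Del a (P 1) = P 1 ^ 2 - 2 * P 1 + a ^ 2 := by unfold Del; ring
  ext i j
  fin_cases i <;> fin_cases j <;>
    simp [g, gFam, Sig, hDel, div_eq_mul_inv, -mul_eq_mul_left_iff] <;> ring

/-- The closed form of the inverse Kerr metric, valid off the axis and the horizons. -/
def gInvFormula (P : Pt) : Matrix (Fin 4) (Fin 4) ℝ :=
    !![
      -(((a ^ 2 + P 1 ^ 2) * Sig a (P 1) (P 2) + 2 * a ^ 2 * (P 1 * (1 - P 2 ^ 2))) *
          ((Sig a (P 1) (P 2))⁻¹ * (Del a (P 1))⁻¹)), 0, 0,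
        -(2 * a) * (P 1 * ((Sig a (P 1) (P 2))⁻¹ * (Del a (P 1))⁻¹));
      0, Del a (P 1) * (Sig a (P 1) (P 2))⁻¹, 0, 0;
      0, 0, (1 - P 2 ^ 2) * (Sig a (P 1) (P 2))⁻¹, 0;
      -(2 * a) * (P 1 * ((Sig a (P 1) (P 2))⁻¹ * (Del a (P 1))⁻¹)), 0, 0,
        (Sig a (P 1) (P 2) - 2 * P 1) *
          ((Sig a (P 1) (P 2))⁻¹ * (Del a (P 1))⁻¹) * (1 - P 2 ^ 2)⁻¹]

theorem gInv_eq {P : Pt} (hr : 2 < P 1) (hz : P 2 ∈ Set.Ioo (-1 : ℝ) 1) :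
    gInv a P = gInvFormula a P := by
  have hSig := (Sig_pos a (zero_lt_two.trans hr) (P 2)).ne'
  have hDel := (Del_pos a hr).ne'
  have hsin := (one_sub_sq_pos hz).ne'
  refine Matrix.inv_eq_right_inv ?_
  ext i j
  fin_cases i <;> fin_cases j <;>
    simp [g_eq, gInvFormula, Matrix.mul_apply, Fin.sum_univ_four] <;>
    field_simp <;> simp only [Sig, Del] <;> ring

theorem isSymbol_sq_add_sq : IsSymbol c k 2 0 fun P => a ^ 2 + P 1 ^ 2 :=
  ((isSymbol_const (a ^ 2)).mono zero_le_two le_rfl).add (isSymbol_radius.pow 2)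

theorem isSymbol_g (i j : Fin 4) :
    IsSymbol 2 k (rWeight i + rWeight j) (sinWeight i + sinWeight j + (rWeight i + rWeight j) % 2)
      fun P => g a P i j := by
  have h₀₀ : IsSymbol 2 k 0 0 fun P => -(1 - 2 * (P 1 * (Sig a (P 1) (P 2))⁻¹)) :=
    ((isSymbol_const 1).sub ((isSymbol_radius.mul (isSymbol_inv_Sig a)).const_mul 2)).neg
  have h₀₃ : IsSymbol 2 k 1 2 fun P =>
      -(2 * a) * (P 1 * ((1 - P 2 ^ 2) * (Sig a (P 1) (P 2))⁻¹)) :=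
    IsGradedSymbol.const_mul _ (isSymbol_radius.mul
      (isSymbol_one_sub_sq.mul (isSymbol_inv_Sig a) le_rfl le_rfl))
  have h₁₁ : IsSymbol 2 k 0 0 fun P => Sig a (P 1) (P 2) * (Del a (P 1))⁻¹ :=
    (isSymbol_Sig a).mul (isSymbol_inv_Del a)
  have h₂₂ : IsSymbol 2 k 2 (-2) fun P => Sig a (P 1) (P 2) * (1 - P 2 ^ 2)⁻¹ :=
    (isSymbol_Sig a).mul isSymbol_inv_one_sub_sq
  have h₃₃ : IsSymbol 2 k 2 2 fun P => (1 - P 2 ^ 2) * (Sig a (P 1) (P 2))⁻¹ *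
      (2 * a ^ 2 * (P 1 * (1 - P 2 ^ 2)) + (a ^ 2 + P 1 ^ 2) * Sig a (P 1) (P 2)) :=
    (isSymbol_one_sub_sq.mul (isSymbol_inv_Sig a) le_rfl le_rfl).mul (p' := 4) (e' := 0)
      (((isSymbol_radius.mul isSymbol_one_sub_sq).const_mul (2 * a ^ 2)).add
        ((isSymbol_sq_add_sq a).mul (isSymbol_Sig a)))
  simp only [g_eq]
  fin_cases i <;> fin_cases j <;>
  first
  | exact isGradedSymbol_zero
  | exact h₀₀.mono (by decide) (by decide)
  | exact h₀₃.mono (by decide) (by decide)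
  | exact h₁₁.mono (by decide) (by decide)
  | exact h₂₂.mono (by decide) (by decide)
  | exact h₃₃.mono (by decide) (by decide)

theorem isSymbol_gInv (i j : Fin 4) :
    IsSymbol 2 k (-rWeight i - rWeight j)
      (-sinWeight i - sinWeight j + (rWeight i + rWeight j) % 2) fun P => gInv a P i j := by
  have hSigDel : IsSymbol 2 k (-4) 0 fun P => (Sig a (P 1) (P 2))⁻¹ * (Del a (P 1))⁻¹ :=
    (isSymbol_inv_Sig a).mul (isSymbol_inv_Del a)
  have hr : IsSymbol 2 k 1 0 fun P => 2 * P 1 := isSymbol_radius.const_mul 2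
  have h₀₀ : IsSymbol 2 k 0 0 fun P =>
      -(((a ^ 2 + P 1 ^ 2) * Sig a (P 1) (P 2) + 2 * a ^ 2 * (P 1 * (1 - P 2 ^ 2))) *
        ((Sig a (P 1) (P 2))⁻¹ * (Del a (P 1))⁻¹)) :=
    IsGradedSymbol.neg (IsSymbol.mul (p := 4) (e := 0)
      (((isSymbol_sq_add_sq a).mul (isSymbol_Sig a)).add
        ((isSymbol_radius.mul isSymbol_one_sub_sq).const_mul (2 * a ^ 2))) hSigDel)
  have h₀₃ : IsSymbol 2 k (-3) 0 fun P =>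
      -(2 * a) * (P 1 * ((Sig a (P 1) (P 2))⁻¹ * (Del a (P 1))⁻¹)) :=
    (isSymbol_radius.mul hSigDel).const_mul (-(2 * a))
  have h₁₁ : IsSymbol 2 k 0 0 fun P => Del a (P 1) * (Sig a (P 1) (P 2))⁻¹ :=
    (isSymbol_Del a).mul (isSymbol_inv_Sig a)
  have h₂₂ : IsSymbol 2 k (-2) 2 fun P => (1 - P 2 ^ 2) * (Sig a (P 1) (P 2))⁻¹ :=
    isSymbol_one_sub_sq.mul (isSymbol_inv_Sig a)
  have h₃₃ : IsSymbol 2 k (-2) (-2) fun P => (Sig a (P 1) (P 2) - 2 * P 1) *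
      ((Sig a (P 1) (P 2))⁻¹ * (Del a (P 1))⁻¹) * (1 - P 2 ^ 2)⁻¹ :=
    (IsSymbol.mul ((isSymbol_Sig a).sub (hr.mono one_le_two le_rfl))
      hSigDel le_rfl le_rfl).mul isSymbol_inv_one_sub_sq
  suffices h : IsSymbol 2 k (-rWeight i - rWeight j)
      (-sinWeight i - sinWeight j + (rWeight i + rWeight j) % 2) fun P => gInvFormula a P i j by
    refine h.congr ?_
    filter_upwards [eventually_radius_gt 2, eventually_cosTheta_mem_Ioo] with P hr hz
    rw [gInv_eq a hr hz]
  fin_cases i <;> fin_cases j <;>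
  first
  | exact isGradedSymbol_zero
  | exact h₀₀.mono (by decide) (by decide)
  | exact h₀₃.mono (by decide) (by decide)
  | exact h₁₁.mono (by decide) (by decide)
  | exact h₂₂.mono (by decide) (by decide)
  | exact h₃₃.mono (by decide) (by decide)

theorem hasWeight_g (i j : Fin 4) :
    HasWeight (rWeight i + rWeight j) (sinWeight i + sinWeight j + (rWeight i + rWeight j) % 2)
      fun P => g a P i j :=
  isSymbol_g (k := 0) a i j

theorem hasWeight_gInv (i j : Fin 4) :
    HasWeight (-rWeight i - rWeight j)
      (-sinWeight i - sinWeight j + (rWeight i + rWeight j) % 2) fun P => gInv a P i j :=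
  isSymbol_gInv (k := 0) a i j

end Metric

section CoordDeriv

variable {E : Type*} [NormedAddCommGroup E] [NormedSpace ℝ E] {c k : ℕ} {p : ℤ} {q : ℕ → ℤ}
  {f : Pt → E}

theorem IsGradedSymbol.radialDeriv (hf : IsGradedSymbol c (k + 1) p q f) :
    IsGradedSymbol c k (p - 1) (fun i => q (i + 1)) fun P => fderiv ℝ f P (Pi.single 1 1) := by
  obtain ⟨-, f₁, f₂, hdf, h₁, -⟩ := hf
  exact h₁.congr (hdf.mono fun P hP => by simp [hP.fderiv, drdz])

theorem IsGradedSymbol.polarDeriv (hf : IsGradedSymbol c (k + 1) p q f) :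
    IsGradedSymbol c k p (fun i => q i - c) fun P => fderiv ℝ f P (Pi.single 2 1) := by
  obtain ⟨-, f₁, f₂, hdf, -, h₂⟩ := hf
  exact h₂.congr (hdf.mono fun P hP => by simp [hP.fderiv, drdz])

theorem IsGradedSymbol.fderiv_single_eventuallyEq_zero (hf : IsGradedSymbol c (k + 1) p q f)
    {i : Fin 4} (h₁ : i ≠ 1) (h₂ : i ≠ 2) :
    (fun P => fderiv ℝ f P (Pi.single i 1)) =ᶠ[farField] 0 := by
  obtain ⟨-, f₁, f₂, hdf, -, -⟩ := hf
  exact hdf.mono fun P hP => by simp [hP.fderiv, drdz, h₁.symm, h₂.symm]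

end CoordDeriv

/-! ### Tensors of weight `r^p` -/

/-- The powers of `sin θ` in the components of a symmetric tensor that is regular on the axis up
to one derivative: components mixing `{t, r}` with `{z, φ}` vanish there to one order more. -/
def componentSeq (i j : Fin 4) : ℕ → ℤ
  | 0 => sinWeight i + sinWeight j + (rWeight i + rWeight j) % 2
  | _ + 1 => sinWeight i + sinWeight j - (rWeight i + rWeight j) % 2

/-- `h` is a covariant 2-tensor field of size `r^p` in orthonormal frames, with first derivatives
of size `r^(p-1)`. -/
def IsTensorSymbol (p : ℤ) (h : Pt → Matrix (Fin 4) (Fin 4) ℝ) : Prop :=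
  ∀ i j, IsGradedSymbol 2 1 (p + rWeight i + rWeight j) (componentSeq i j) fun P => h P i j

section Tensor

variable (a : ℝ) {p : ℤ} {h : Pt → Matrix (Fin 4) (Fin 4) ℝ}

theorem antitone_componentSeq (i j : Fin 4) : Antitone (componentSeq i j) := by
  refine antitone_nat_of_succ_le fun n => ?_
  cases n <;> simp only [componentSeq] <;> lia

theorem isTensorSymbol_g : IsTensorSymbol 0 (g a) := fun i j =>
  IsGradedSymbol.mono (isSymbol_g a i j) (by lia) fun n _ => by
    cases n <;> simp only [componentSeq] <;> lia

theorem IsTensorSymbol.hasWeight (hh : IsTensorSymbol p h) (i j : Fin 4) :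
    HasWeight (p + rWeight i + rWeight j) (sinWeight i + sinWeight j + (rWeight i + rWeight j) % 2)
      fun P => h P i j :=
  (hh i j).hasWeight

theorem IsTensorSymbol.hasWeight_pd (hh : IsTensorSymbol p h) (c i j : Fin 4) :
    HasWeight (p - 1 + rWeight i + rWeight j + rWeight c)
      (sinWeight i + sinWeight j + sinWeight c - (rWeight i + rWeight j + rWeight c) % 2)
      (pd c fun P => h P i j) := by
  have hr₁ : rWeight 1 = 0 := rfl
  have hs₁ : sinWeight 1 = 0 := rfl
  have hr₂ : rWeight 2 = 1 := rfl
  have hs₂ : sinWeight 2 = -1 := rfl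
  by_cases h₁ : c = 1
  · subst h₁
    exact (hh i j).radialDeriv.hasWeight.mono (by lia) (by simp only [componentSeq]; lia)
  by_cases h₂ : c = 2
  · subst h₂
    exact (hh i j).polarDeriv.hasWeight.mono (by lia) (by simp only [componentSeq]; lia)
  exact (isBigO_zero _ _).congr' ((hh i j).fderiv_single_eventuallyEq_zero h₁ h₂).symm .rfl

theorem hasWeight_Chr (l m n : Fin 4) :
    HasWeight (rWeight m + rWeight n - rWeight l - 1)
      (sinWeight m + sinWeight n - sinWeight l - (rWeight l + rWeight m + rWeight n) % 2)
      (Chr a l m n) := by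
  refine IsBigO.const_mul_left (hasWeight_sum fun s _ => ?_) _
  have hdg := (isTensorSymbol_g a).hasWeight_pd
  have hsum : HasWeight (rWeight m + rWeight n + rWeight s - 1)
      (sinWeight m + sinWeight n + sinWeight s - (rWeight m + rWeight n + rWeight s) % 2) fun P =>
      pd m (fun q => g a q s n) P + pd n (fun q => g a q s m) P - pd s (fun q => g a q m n) P :=
    IsBigO.sub
      (IsBigO.add ((hdg m s n).mono (by lia) (by lia)) ((hdg n s m).mono (by lia) (by lia)))
      ((hdg s m n).mono (by lia) (by lia))
  have := rWeight_eq_zero_or_one s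
  have := rWeight_eq_zero_or_one l
  exact (hasWeight_gInv a l s).mul hsum (by lia) (by lia)

theorem IsTensorSymbol.hasWeight_covD2 (hh : IsTensorSymbol p h) (c i j : Fin 4) :
    HasWeight (p - 1 + rWeight i + rWeight j + rWeight c)
      (sinWeight i + sinWeight j + sinWeight c - (rWeight i + rWeight j + rWeight c) % 2)
      (covD2 a h c i j) := by
  refine IsBigO.sub (IsBigO.sub (hh.hasWeight_pd c i j) (hasWeight_sum fun s _ => ?_))
    (hasWeight_sum fun s _ => ?_)
  · exact (hasWeight_Chr a s c i).mul (hh.hasWeight s j) (by lia) (by lia)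
  · exact (hasWeight_Chr a s c j).mul (hh.hasWeight i s) (by lia) (by lia)

theorem IsTensorSymbol.hasWeight_divergence (hh : IsTensorSymbol p h) (i : Fin 4) :
    HasWeight (p - 1 + rWeight i) (sinWeight i - rWeight i)
      fun P => ∑ l, ∑ s, gInv a P l s * covD2 a h s i l P := by
  refine hasWeight_sum fun l _ => hasWeight_sum fun s _ => ?_
  have hi := rWeight_eq_zero_or_one i
  exact (hasWeight_gInv a l s).mul (hh.hasWeight_covD2 a s i l) (by lia) (by lia)

theorem IsTensorSymbol.trace (hh : IsTensorSymbol p h) :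
    IsGradedSymbol 2 1 p (fun _ => 0) fun P => ∑ l, ∑ s, gInv a P l s * h P l s := by
  refine isGradedSymbol_sum fun l _ => isGradedSymbol_sum fun s _ => ?_
  refine (isSymbol_gInv a l s).mul_graded (hh l s) (antitone_componentSeq l s) (by lia) ?_
  rintro (_ | n) - <;> simp only [componentSeq] <;> lia

theorem IsTensorSymbol.traceReverse (hh : IsTensorSymbol p h) :
    IsTensorSymbol p (trRev a h) := fun i j =>
  (hh i j).sub (IsSymbol.mul_graded (IsGradedSymbol.const_mul (1 / 2) (isSymbol_g a i j))
    (hh.trace a) antitone_const (by lia) fun n _ => by cases n <;> simp only [componentSeq] <;> lia)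

section AbbottDeser

variable (x y : ℝ)

theorem hasWeight_kvec (s : Fin 4) :
    HasWeight (1 - rWeight s) (rWeight s - sinWeight s) fun _ => kvec x y s := by
  fin_cases s
  · exact (hasWeight_const x).mono (by decide) (by decide)
  · exact isBigO_zero _ _
  · exact isBigO_zero _ _
  · exact (hasWeight_const y).mono (by decide) (by decide)

theorem hasWeight_kco (i : Fin 4) :
    HasWeight (1 + rWeight i) (sinWeight i + rWeight i) fun P => kco a x y P i := by
  refine hasWeight_sum fun s _ => ?_
  have hi := rWeight_eq_zero_or_one i
  have hs := rWeight_eq_zero_or_one s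
  exact (hasWeight_g a i s).mul (hasWeight_kvec x y s) (by lia) (by lia)

theorem hasWeight_covDk (b l : Fin 4) :
    HasWeight (rWeight b - rWeight l) (sinWeight b - sinWeight l - (rWeight b + rWeight l) % 2)
      (covDk a x y b l) := by
  have hconst : pd b (fun _ => kvec x y l) = fun _ => 0 := by
    funext P
    simp [pd]
  unfold covDk
  simp only [hconst, zero_add]
  refine hasWeight_sum fun s _ => ?_
  have hs := rWeight_eq_zero_or_one s
  exact (hasWeight_Chr a l b s).mul (hasWeight_kvec x y s) (by lia) (by lia)

theorem IsTensorSymbol.hasWeight_ADform (hh : IsTensorSymbol p h) (i j : Fin 4) :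
    HasWeight (p + rWeight i + rWeight j)
      (sinWeight i + sinWeight j - (rWeight i + rWeight j) % 2) (ADform a h x y i j) := by
  have hbar := hh.traceReverse a
  have hi := rWeight_eq_zero_or_one i
  have hj := rWeight_eq_zero_or_one j
  refine IsBigO.const_mul_left (IsBigO.sub (IsBigO.add (IsBigO.const_mul_left
    (hasWeight_sum fun l _ => ?_) _) (IsBigO.const_mul_left (hasWeight_sum fun l _ => ?_) _))
    (IsBigO.const_mul_left (IsBigO.sub ?_ ?_) _)) _
  · have hl := rWeight_eq_zero_or_one l
    have hcov : HasWeight (p - 1 + rWeight i + rWeight j + rWeight l) (sinWeight i + sinWeight j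
        + sinWeight l - (rWeight i + rWeight j + rWeight l) % 2)
        fun P => covD2 a (trRev a h) i j l P - covD2 a (trRev a h) j i l P :=
      IsBigO.sub ((hbar.hasWeight_covD2 a i j l).mono (by lia) (by lia))
        ((hbar.hasWeight_covD2 a j i l).mono (by lia) (by lia))
    exact (hasWeight_kvec x y l).mul hcov (by lia) (by lia)
  · have := rWeight_eq_zero_or_one l
    refine IsBigO.sub ?_ ?_
    · exact (hbar.hasWeight l i).mul (hasWeight_covDk a x y j l) (by lia) (by lia)
    · exact (hbar.hasWeight l j).mul (hasWeight_covDk a x y i l) (by lia) (by lia)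
  · exact (hasWeight_kco a x y i).mul (hbar.hasWeight_divergence a j) (by lia) (by lia)
  · exact (hasWeight_kco a x y j).mul (hbar.hasWeight_divergence a i) (by lia) (by lia)

theorem IsTensorSymbol.hasWeight_ADformUp (hh : IsTensorSymbol p h) (i j : Fin 4) :
    HasWeight (p - rWeight i - rWeight j)
      (-sinWeight i - sinWeight j - (rWeight i + rWeight j) % 2) (ADformUp a h x y i j) := by
  refine hasWeight_sum fun m _ => hasWeight_sum fun n _ => ?_
  exact ((hasWeight_gInv a i m).mul (hasWeight_gInv a j n) le_rfl le_rfl).mul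
    (hh.hasWeight_ADform a x y m n) (by lia) (by lia)

theorem IsTensorSymbol.hasWeight_Fdens (hh : IsTensorSymbol p h) :
    HasWeight (p + 2) 0 (Fdens a h x y) :=
  (isSymbol_Sig (c := 0) (k := 0) a).hasWeight.mul (hh.hasWeight_ADformUp a x y 1 0)
    (by simp [rWeight]; lia) (by simp [rWeight, sinWeight])

end AbbottDeser

end Tensor

/-! ### Newman–Penrose quantities as symbols -/

section NewmanPenrose

variable {c k : ℕ} (a : ℝ)

/-- The complex radius `ζ = r - iaz`, so that `ρ = -1/ζ`. -/
def complexRadius (P : Pt) : ℂ := (P 1 : ℂ) - Complex.I * (a : ℂ) * (P 2 : ℂ)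

theorem radius_le_norm_complexRadius (P : Pt) : P 1 ≤ ‖complexRadius a P‖ := by
  simpa [complexRadius] using Complex.re_le_norm (complexRadius a P)

theorem isSymbol_complexRadius : IsSymbol c k 1 0 (complexRadius a) :=
  isSymbol_radius.ofReal.sub
    ((isSymbol_cosTheta.ofReal.const_mul (Complex.I * (a : ℂ))).mono zero_le_one fun _ _ => le_rfl)

theorem isSymbol_rhoC : IsSymbol c k (-1) 0 (rhoC a) := by
  have hlow : (fun P : Pt => P 1 ^ (1 : ℤ) * sinTheta P ^ (0 : ℤ)) =O[farField]
      complexRadius a := by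
    refine .of_bound' ?_
    filter_upwards [eventually_radius_gt 0] with P hr
    simpa [abs_of_pos hr] using radius_le_norm_complexRadius a P
  refine IsGradedSymbol.congr ((isSymbol_complexRadius a).inv hlow).neg (.of_forall fun P => ?_)
  simp only [rhoC, complexRadius, neg_div, one_div]

theorem isSymbol_conj_rhoC : IsSymbol c k (-1) 0 fun P => conj (rhoC a P) :=
  (isSymbol_rhoC a).star

theorem isSymbol_rhoC_zpow_neg_four : IsSymbol c k 4 0 fun P => rhoC a P ^ (-4 : ℤ) := by
  refine IsGradedSymbol.congr ((isSymbol_complexRadius a).pow 4) (.of_forall fun P => ?_)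
  beta_reduce
  rw [zpow_neg, ← inv_zpow, rhoC, inv_div, div_neg, div_one]
  exact (Even.neg_zpow (by decide) _).trans (zpow_natCast _ 4)

theorem isSymbol_rhoC_mul_conj : IsSymbol c k (-2) 0 fun P => rhoC a P * conj (rhoC a P) :=
  (isSymbol_rhoC a).mul (isSymbol_conj_rhoC a)

theorem isSymbol_muNP : IsSymbol c k (-1) 0 (muNP a) := by
  have h : IsSymbol c k (-1) 0 fun P =>
      rhoC a P ^ 2 * conj (rhoC a P) * (Del a (P 1) : ℂ) :=
    (((isSymbol_rhoC a).pow 2).mul (p'' := -3) (e'' := 0) (isSymbol_conj_rhoC a)).mul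
      (isSymbol_Del a).ofReal
  refine (h.const_mul 2⁻¹).congr (.of_forall fun P => ?_)
  rw [muNP, div_eq_inv_mul]

theorem isSymbol_gamNP : IsSymbol c k (-1) 0 (gamNP a) := by
  have hr : IsSymbol c k 1 0 fun P => (P 1 : ℂ) - 1 :=
    isSymbol_radius.ofReal.sub ((isSymbol_const 1).mono zero_le_one le_rfl)
  have h : IsSymbol c k (-1) 0 fun P => rhoC a P * conj (rhoC a P) * ((P 1 : ℂ) - 1) :=
    (isSymbol_rhoC_mul_conj a).mul hr
  refine ((isSymbol_muNP a).add (h.const_mul 2⁻¹)).congr (.of_forall fun P => ?_)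
  rw [gamNP, div_eq_inv_mul _ (2 : ℂ)]

theorem isSymbol_tauNP : IsSymbol 2 k (-1) (-1) (tauNP a) := by
  have h : IsSymbol 2 k (-2) 1 fun P => rhoC a P * conj (rhoC a P) * (sinTheta P : ℂ) :=
    (isSymbol_rhoC_mul_conj a).mul isSymbol_sinTheta.ofReal
  refine IsSymbol.mono (f := tauNP a) (IsGradedSymbol.congr
    (h.const_mul (-Complex.I * a / (√2 : ℂ))) (.of_forall fun P => ?_))
    (by norm_num) (by norm_num)
  simp only [tauNP, sinTheta]
  ring

theorem isSymbol_piNP : IsSymbol 2 k (-1) (-1) (piNP a) := by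
  have h : IsSymbol 2 k (-2) 1 fun P => rhoC a P ^ 2 * (sinTheta P : ℂ) :=
    ((isSymbol_rhoC a).pow 2).mul isSymbol_sinTheta.ofReal
  refine IsSymbol.mono (f := piNP a) (IsGradedSymbol.congr
    (h.const_mul (Complex.I * a / (√2 : ℂ))) (.of_forall fun P => ?_))
    (by norm_num) (by norm_num)
  simp only [piNP, sinTheta]
  ring

theorem isSymbol_betNP : IsSymbol 2 k (-1) (-1) (betNP a) := by
  have h : IsSymbol 2 k (-1) (-1) fun P =>
      conj (rhoC a P) * (P 2 : ℂ) * (((sinTheta P)⁻¹ : ℝ) : ℂ) :=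
    ((isSymbol_conj_rhoC a).mul (p'' := -1) (e'' := 0) isSymbol_cosTheta.ofReal).mul
      isSymbol_inv_sinTheta.ofReal
  refine (h.const_mul (-(2 * (√2 : ℂ))⁻¹)).congr (.of_forall fun P => ?_)
  simp only [betNP, sinTheta, div_eq_mul_inv, mul_inv, Complex.ofReal_inv]
  ring

theorem isSymbol_alpNP : IsSymbol 2 k (-1) (-1) (alpNP a) :=
  (isSymbol_piNP a).sub (isSymbol_betNP a).star

/-- `v` is a tetrad leg of spin parity `ε`: its component `i` is a symbol with an extra factor
`sin θ` exactly when the parities of `ε` and of the coordinate direction `i` differ.  The real legs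
have `ε = 0`, the complex ones `ε = 1`. -/
def IsLeg (ε : ℤ) (v : Pt → Fin 4 → ℂ) : Prop :=
  ∀ k i, IsSymbol 2 k (-rWeight i) (-sinWeight i + (rWeight i + ε) % 2) fun P => v P i

theorem isLeg_lvec : IsLeg 0 (lvec a) := by
  refine fun k i => IsGradedSymbol.ofReal (f := fun P => _) ?_
  have h₀ : IsSymbol 2 k 0 0 fun P => (P 1 ^ 2 + a ^ 2) / Del a (P 1) := by
    simp only [div_eq_mul_inv, add_comm _ (a ^ 2)]
    exact (isSymbol_sq_add_sq a).mul (isSymbol_inv_Del a)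
  have h₃ : IsSymbol 2 k (-1) 0 fun P => a / Del a (P 1) := by
    simp only [div_eq_mul_inv]
    exact (isSymbol_const a).mul (isSymbol_inv_Del a)
  fin_cases i
  exacts [h₀, isSymbol_const 1, isGradedSymbol_zero, h₃]

theorem isLeg_nvec : IsLeg 0 (nvec a) := by
  refine fun k i => IsGradedSymbol.ofReal (f := fun P => _) ?_
  have hSig : IsSymbol 2 k (-2) 0 fun P => (2 * Sig a (P 1) (P 2))⁻¹ := by
    simp only [mul_inv]
    exact (isSymbol_inv_Sig a).const_mul 2⁻¹
  have h₀ : IsSymbol 2 k 0 0 fun P => (P 1 ^ 2 + a ^ 2) / (2 * Sig a (P 1) (P 2)) := by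
    simp only [div_eq_mul_inv, add_comm _ (a ^ 2)]
    exact (isSymbol_sq_add_sq a).mul hSig
  have h₁ : IsSymbol 2 k 0 0 fun P => -Del a (P 1) / (2 * Sig a (P 1) (P 2)) := by
    simp only [div_eq_mul_inv]
    exact IsSymbol.mul (isSymbol_Del a).neg hSig
  have h₃ : IsSymbol 2 k (-1) 0 fun P => a / (2 * Sig a (P 1) (P 2)) := by
    simp only [div_eq_mul_inv]
    exact (isSymbol_const a).mul hSig
  fin_cases i
  exacts [h₀, h₁, isGradedSymbol_zero, h₃]

theorem isLeg_mvec : IsLeg 1 (mvec a) := by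
  intro k i
  have hpre : IsSymbol 2 k (-1) 1 fun P =>
      -(conj (rhoC a P)) * (√(1 - P 2 ^ 2) : ℂ) / (√2 : ℂ) := by
    refine IsGradedSymbol.congr (((isSymbol_conj_rhoC a).mul (p'' := -1) (e'' := 1)
      isSymbol_sinTheta.ofReal).const_mul (-(√2 : ℂ)⁻¹)) (.of_forall fun P => ?_)
    simp only [sinTheta]
    ring
  have h₃ : IsSymbol 2 k 0 (-2) fun P => Complex.I / (1 - (P 2 : ℂ) ^ 2) := by
    refine IsGradedSymbol.congr (isSymbol_inv_one_sub_sq.ofReal.const_mul Complex.I)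
      (.of_forall fun P => ?_)
    push_cast
    rw [div_eq_mul_inv]
  fin_cases i
  · exact hpre.mul (isSymbol_const (Complex.I * a)) (by decide) (by decide)
  · exact hpre.mul (isGradedSymbol_zero : IsSymbol 2 k 0 0 _) (by decide) (by decide)
  · exact hpre.mul (isSymbol_const (-1)) (by decide) (by decide)
  · exact hpre.mul h₃ (by decide) (by decide)

variable {ε : ℤ} {v : Pt → Fin 4 → ℂ}

theorem IsLeg.star (hv : IsLeg ε v) : IsLeg ε fun P i => conj (v P i) :=
  fun k i => (hv k i).star

theorem IsLeg.lower (hv : IsLeg ε v) (k : ℕ) (i : Fin 4) :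
    IsSymbol 2 k (rWeight i) (sinWeight i + (rWeight i + ε) % 2)
      fun P => ∑ j, (g a P i j : ℂ) * v P j :=
  isGradedSymbol_sum fun j _ => IsSymbol.mul (isSymbol_g a i j).ofReal (hv k j) (by lia) (by lia)

end NewmanPenrose

section FirstOrderOperators

variable {k : ℕ} {p : ℤ} {q : ℕ → ℤ} {u v : Pt → Fin 4 → ℂ} {c f : Pt → ℂ}

theorem IsGradedSymbol.opD_real (hf : IsGradedSymbol 2 (k + 1) p q f) (hu : IsLeg 0 u)
    (hu₂ : ∀ P, u P 2 = 0) (hc : IsSymbol 2 k (-1) 0 c) (hq : Antitone q) :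
    IsGradedSymbol 2 k (p - 1) (fun i => q (i + 1)) (opD u c f) := by
  have hmain : IsGradedSymbol 2 k (p - 1) (fun i => q (i + 1))
      fun P => u P 1 * pdC 1 f P + c P * f P :=
    ((hu k 1).mul_graded hf.radialDeriv (fun i j hij => hq (by lia)) (by simp [rWeight])
      fun i _ => by simp [rWeight, sinWeight]).add
    (hc.mul_graded hf.of_succ hq (by lia) fun i _ => by simpa using hq i.le_succ)
  refine hmain.congr ?_
  filter_upwards [hf.fderiv_single_eventuallyEq_zero (i := 0) (by decide) (by decide),
    hf.fderiv_single_eventuallyEq_zero (i := 3) (by decide) (by decide)] with P h₀ h₃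
  simp [opD, dirD, Fin.sum_univ_four, pdC, h₀, h₃, hu₂]

theorem IsGradedSymbol.opD_complex (hf : IsGradedSymbol 2 (k + 1) p q f) (hv : IsLeg 1 v)
    (hv₁ : ∀ P, v P 1 = 0) (hc : IsSymbol 2 k (-1) (-1) c) (hq : Antitone q) :
    IsGradedSymbol 2 k (p - 1) (fun i => q i - 1) (opD v c f) := by
  have hmain : IsGradedSymbol 2 k (p - 1) (fun i => q i - 1)
      fun P => v P 2 * pdC 2 f P + c P * f P :=
    ((hv k 2).mul_graded hf.polarDeriv (fun i j hij => sub_le_sub_right (hq hij) _)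
      (by simp [rWeight]) fun i _ => by simp [rWeight, sinWeight]; lia).add
    (hc.mul_graded hf.of_succ hq (by lia) fun i _ => by lia)
  refine hmain.congr ?_
  filter_upwards [hf.fderiv_single_eventuallyEq_zero (i := 0) (by decide) (by decide),
    hf.fderiv_single_eventuallyEq_zero (i := 3) (by decide) (by decide)] with P h₀ h₃
  simp [opD, dirD, Fin.sum_univ_four, pdC, h₀, h₃, hv₁]

end FirstOrderOperators

/-! ### The metric perturbation of a Hertz potential -/

/-- The powers of `sin θ` in the radial derivatives of a Hertz potential: the potential and its
first radial derivative vanish on the axis to second order. -/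
def hertzSeq (i : ℕ) : ℤ := if i ≤ 1 then 2 else 0

theorem antitone_hertzSeq : Antitone hertzSeq := by
  intro i j hij
  unfold hertzSeq
  split_ifs <;> lia

section HertzPotential

variable {p : ℤ} {u v : Pt → Fin 4 → ℂ} {c c' Φ : Pt → ℂ}

theorem isSymbol_opD_real_opD_real (hΦ : IsGradedSymbol 2 3 p hertzSeq Φ) (hu : IsLeg 0 u)
    (hu₂ : ∀ P, u P 2 = 0) (hc : ∀ k, IsSymbol 2 k (-1) 0 c) (hc' : ∀ k, IsSymbol 2 k (-1) 0 c') :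
    IsSymbol 2 1 (p - 2) 0 (opD u c (opD u c' Φ)) := by
  have h := hΦ.opD_real hu hu₂ (hc' 2) antitone_hertzSeq
  refine (h.opD_real hu hu₂ (hc 1) fun i j hij => antitone_hertzSeq (by lia)).mono (by lia) ?_
  intro i _
  unfold hertzSeq
  split_ifs <;> lia

theorem isSymbol_opD_complex_opD_complex (hΦ : IsGradedSymbol 2 3 p hertzSeq Φ) (hv : IsLeg 1 v)
    (hv₁ : ∀ P, v P 1 = 0) (hc : ∀ k, IsSymbol 2 k (-1) (-1) c)
    (hc' : ∀ k, IsSymbol 2 k (-1) (-1) c') :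
    IsSymbol 2 1 (p - 2) 0 (opD v c (opD v c' Φ)) := by
  have h := hΦ.opD_complex hv hv₁ (hc' 2) antitone_hertzSeq
  refine (h.opD_complex hv hv₁ (hc 1)
    fun i j hij => sub_le_sub_right (antitone_hertzSeq hij) 1).mono (by lia) ?_
  intro i hi
  unfold hertzSeq
  split_ifs
  lia

theorem isGradedSymbol_opD_complex_opD_real (hΦ : IsGradedSymbol 2 3 p hertzSeq Φ)
    (hu : IsLeg 0 u) (hu₂ : ∀ P, u P 2 = 0) (hv : IsLeg 1 v) (hv₁ : ∀ P, v P 1 = 0)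
    (hc : ∀ k, IsSymbol 2 k (-1) (-1) c) (hc' : ∀ k, IsSymbol 2 k (-1) 0 c') :
    IsGradedSymbol 2 1 (p - 2) (fun i => 1 - 2 * i) (opD v c (opD u c' Φ)) := by
  have h := hΦ.opD_real hu hu₂ (hc' 2) antitone_hertzSeq
  refine (h.opD_complex hv hv₁ (hc 1)
    fun i j hij => antitone_hertzSeq (by lia)).mono (by lia) ?_
  intro i hi
  unfold hertzSeq
  split_ifs <;> lia

theorem isGradedSymbol_opD_real_opD_complex (hΦ : IsGradedSymbol 2 3 p hertzSeq Φ)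
    (hu : IsLeg 0 u) (hu₂ : ∀ P, u P 2 = 0) (hv : IsLeg 1 v) (hv₁ : ∀ P, v P 1 = 0)
    (hc : ∀ k, IsSymbol 2 k (-1) 0 c) (hc' : ∀ k, IsSymbol 2 k (-1) (-1) c') :
    IsGradedSymbol 2 1 (p - 2) (fun i => 1 - 2 * i) (opD u c (opD v c' Φ)) := by
  have h := hΦ.opD_complex hv hv₁ (hc' 2) antitone_hertzSeq
  refine (h.opD_real hu hu₂ (hc 1)
    fun i j hij => sub_le_sub_right (antitone_hertzSeq hij) 1).mono (by lia) ?_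
  intro i hi
  unfold hertzSeq
  split_ifs <;> lia

end HertzPotential

section CCK

variable {p : ℤ} {a : ℝ}

/-- The symmetric tensor `A uu + B vv - C u⊙v` built from the lowered legs `u` and `v`; the CCK
operators have this shape. -/
def legTensor (a : ℝ) (u v : Pt → Fin 4 → ℂ) (A B C : Pt → ℂ) (P : Pt) (i j : Fin 4) : ℂ :=
  let u' := fun i => ∑ j, (g a P i j : ℂ) * u P j
  let v' := fun i => ∑ j, (g a P i j : ℂ) * v P j
  u' i * u' j * A P + v' i * v' j * B P - (1 / 2) * (u' i * v' j + u' j * v' i) * C P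

theorem isGradedSymbol_legTensor {u v : Pt → Fin 4 → ℂ} {A B C : Pt → ℂ} (hu : IsLeg 0 u)
    (hv : IsLeg 1 v) (hA : IsSymbol 2 1 p 0 A) (hB : IsSymbol 2 1 p 0 B)
    (hC : IsGradedSymbol 2 1 p (fun i => 1 - 2 * i) C) (i j : Fin 4) :
    IsGradedSymbol 2 1 (p + rWeight i + rWeight j) (componentSeq i j)
      fun P => legTensor a u v A B C P i j := by
  have := rWeight_eq_zero_or_one i
  have := rWeight_eq_zero_or_one j
  have hu' := hu.lower a 1
  have hv' := hv.lower a 1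
  have hanti : Antitone fun i : ℕ => (1 - 2 * i : ℤ) := fun i j hij => by
    dsimp only
    lia
  have huv : IsSymbol 2 1 (rWeight i + rWeight j)
      (sinWeight i + sinWeight j + 1 - (rWeight i + rWeight j) % 2) fun P =>
        1 / 2 * ((∑ k, (g a P i k : ℂ) * u P k) * (∑ k, (g a P j k : ℂ) * v P k) +
          (∑ k, (g a P j k : ℂ) * u P k) * ∑ k, (g a P i k : ℂ) * v P k) :=
    IsGradedSymbol.const_mul _ (((hu' i).mul (hv' j) (by lia) (by lia)).add
      ((hu' j).mul (hv' i) (by lia) (by lia)))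
  refine ((((hu' i).mul (hu' j) le_rfl le_rfl).mul_graded hA antitone_const (by lia) ?_).add
    (((hv' i).mul (hv' j) le_rfl le_rfl).mul_graded hB antitone_const (by lia) ?_)).sub
    (huv.mul_graded hC hanti (by lia) ?_)
  all_goals
    rintro (_ | n) hn <;> simp only [componentSeq] <;> lia

theorem isTensorSymbol_of_hop {s : ℤ} {u v : Pt → Fin 4 → ℂ} {A B C Φ : Pt → ℂ} (hu : IsLeg 0 u)
    (hv : IsLeg 1 v) (hA : IsSymbol 2 1 p 0 A) (hB : IsSymbol 2 1 p 0 B)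
    (hC : IsGradedSymbol 2 1 p (fun i => 1 - 2 * i) C)
    (h : ∀ P i j, Hop a s Φ P i j = -legTensor a u v A B C P i j) :
    IsTensorSymbol p (hCCK a s Φ) := fun i j => by
  have hHop : IsGradedSymbol 2 1 (p + rWeight i + rWeight j) (componentSeq i j)
      fun P => Hop a s Φ P i j := by
    simpa only [h] using (isGradedSymbol_legTensor hu hv hA hB hC i j).neg
  exact (hHop.add hHop.star).re

theorem isTensorSymbol_hCCK_neg_two {Φ : Pt → ℂ} (hΦ : IsGradedSymbol 2 3 (-1) hertzSeq Φ) :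
    IsTensorSymbol (-3) (hCCK a (-2) Φ) := by
  have hl₂ (P : Pt) : lvec a P 2 = 0 := by simp [lvec]
  have hm₁ (P : Pt) : mvec a P 1 = 0 := by simp [mvec]
  have hρ (k : ℕ) : IsSymbol 2 k (-1) 0 (rhoC a) := isSymbol_rhoC a
  have hτ (k : ℕ) : IsSymbol 2 k (-1) (-1) (tauNP a) := isSymbol_tauNP a
  have hβ (k : ℕ) : IsSymbol 2 k (-1) (-1) (betNP a) := isSymbol_betNP a
  have hα (k : ℕ) : IsSymbol 2 k (-1) (-1) (alpNP a) := isSymbol_alpNP a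
  have hD (k : ℕ) := (hρ k).const_mul 3
  have hδ (k : ℕ) := ((hβ k).const_mul 4).add ((hτ k).const_mul 3)
  refine isTensorSymbol_of_hop (isLeg_nvec a) (isLeg_mvec a).star
    (isSymbol_opD_complex_opD_complex hΦ (isLeg_mvec a) hm₁
      (fun k => ((hα k).star.add ((hβ k).const_mul 3)).sub (hτ k)) hδ)
    (isSymbol_opD_real_opD_real hΦ (isLeg_lvec a) hl₂ (fun k => (hρ k).neg) hD)
    ((isGradedSymbol_opD_complex_opD_real hΦ (isLeg_lvec a) hl₂ (isLeg_mvec a) hm₁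
      (fun k => (((hα k).star.const_mul (-2)).add ((hβ k).const_mul 2)).sub (hτ k)) hD).add
    (isGradedSymbol_opD_real_opD_complex hΦ (isLeg_lvec a) hl₂ (isLeg_mvec a) hm₁
      (fun k => (hρ k).star.sub (hρ k)) hδ)) fun P i j => rfl

theorem isTensorSymbol_hCCK_two {Φ : Pt → ℂ} (hΦ : IsGradedSymbol 2 3 (-5) hertzSeq Φ) :
    IsTensorSymbol (-3) (hCCK a 2 Φ) := by
  have hn₂ (P : Pt) : nvec a P 2 = 0 := by simp [nvec]
  have hm₁ (P : Pt) : mbvec a P 1 = 0 := by simp [mbvec, mvec]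
  have hmb : IsLeg 1 (mbvec a) := (isLeg_mvec a).star
  have hρ : IsSymbol 2 1 4 0 fun P => rhoC a P ^ (-4 : ℤ) := isSymbol_rhoC_zpow_neg_four a
  have hμ (k : ℕ) : IsSymbol 2 k (-1) 0 (muNP a) := isSymbol_muNP a
  have hγ (k : ℕ) : IsSymbol 2 k (-1) 0 (gamNP a) := isSymbol_gamNP a
  have hτ (k : ℕ) : IsSymbol 2 k (-1) (-1) (tauNP a) := isSymbol_tauNP a
  have hπ (k : ℕ) : IsSymbol 2 k (-1) (-1) (piNP a) := isSymbol_piNP a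
  have hβ (k : ℕ) : IsSymbol 2 k (-1) (-1) (betNP a) := isSymbol_betNP a
  have hα (k : ℕ) : IsSymbol 2 k (-1) (-1) (alpNP a) := isSymbol_alpNP a
  have hΔ (k : ℕ) := (hμ k).sub ((hγ k).const_mul 4)
  have hδ (k : ℕ) := ((hα k).const_mul (-4)).add (hπ k)
  have hA := isSymbol_opD_complex_opD_complex hΦ hmb hm₁
    (fun k => (((hα k).const_mul (-3)).sub (hβ k).star).add ((hπ k).const_mul 5)) hδ
  have hB := isSymbol_opD_real_opD_real hΦ (isLeg_nvec a) hn₂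
    (fun k => (((hμ k).const_mul 5).sub ((hγ k).const_mul 3)).add (hγ k).star) hΔ
  have hC := (isGradedSymbol_opD_complex_opD_real hΦ (isLeg_nvec a) hn₂ hmb hm₁
    (fun k => ((((hα k).const_mul (-3)).add (hβ k).star).add
      ((hπ k).const_mul 5)).add (hτ k).star) hΔ).add
    (isGradedSymbol_opD_real_opD_complex hΦ (isLeg_nvec a) hn₂ hmb hm₁
      (fun k => ((((hμ k).const_mul 5).sub (hμ k).star).sub ((hγ k).const_mul 3)).sub
        (hγ k).star) hδ)
  refine isTensorSymbol_of_hop (isLeg_lvec a) (isLeg_mvec a) (hρ.mul hA) (hρ.mul hB)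
    (hρ.mul_graded hC (fun i j hij => ?_)) fun P i j => ?_
  · lia
  · simp only [Hop, if_pos, Hplus, legTensor, lco, mco]
    ring

end CCK

/-! ### Functions of `r` and `z` -/

section PartialDerivatives

open Function (uncurry)

variable {f h : ℝ → ℝ → ℂ} {q : ℝ × ℝ}

theorem hasDerivAt_slice_left (hf : DifferentiableAt ℝ (uncurry f) q) :
    HasDerivAt (fun r => f r q.2) (fderiv ℝ (uncurry f) q (1, 0)) q.1 :=
  HasFDerivAt.comp_hasDerivAt (l := uncurry f) (f := fun r => (r, q.2)) q.1 hf.hasFDerivAt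
    ((hasDerivAt_id q.1).prodMk (hasDerivAt_const q.1 q.2))

theorem hasDerivAt_slice_right (hf : DifferentiableAt ℝ (uncurry f) q) :
    HasDerivAt (fun z => f q.1 z) (fderiv ℝ (uncurry f) q (0, 1)) q.2 :=
  HasFDerivAt.comp_hasDerivAt (l := uncurry f) (f := fun z => (q.1, z)) q.2 hf.hasFDerivAt
    ((hasDerivAt_const q.2 q.1).prodMk (hasDerivAt_id q.2))

theorem pdr2_eq_fderiv (hf : DifferentiableAt ℝ (uncurry f) q) :
    pdr2 f q.1 q.2 = fderiv ℝ (uncurry f) q (1, 0) :=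
  (hasDerivAt_slice_left hf).deriv

theorem pdz2_eq_fderiv (hf : DifferentiableAt ℝ (uncurry f) q) :
    pdz2 f q.1 q.2 = fderiv ℝ (uncurry f) q (0, 1) :=
  (hasDerivAt_slice_right hf).deriv

theorem hasDerivAt_pdr2 (hf : DifferentiableAt ℝ (uncurry f) q) :
    HasDerivAt (fun r => f r q.2) (pdr2 f q.1 q.2) q.1 :=
  (hasDerivAt_slice_left hf).differentiableAt.hasDerivAt

theorem hasDerivAt_pdz2 (hf : DifferentiableAt ℝ (uncurry f) q) :
    HasDerivAt (fun z => f q.1 z) (pdz2 f q.1 q.2) q.2 :=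
  (hasDerivAt_slice_right hf).differentiableAt.hasDerivAt

theorem pdr2_eventuallyEq_fderiv (hf : ContDiffAt ℝ 1 (uncurry f) q) :
    uncurry (pdr2 f) =ᶠ[𝓝 q] fun q => fderiv ℝ (uncurry f) q (1, 0) :=
  (hf.eventually (by simp)).mono fun _ h => pdr2_eq_fderiv (h.differentiableAt (by simp))

theorem pdz2_eventuallyEq_fderiv (hf : ContDiffAt ℝ 1 (uncurry f) q) :
    uncurry (pdz2 f) =ᶠ[𝓝 q] fun q => fderiv ℝ (uncurry f) q (0, 1) :=
  (hf.eventually (by simp)).mono fun _ h => pdz2_eq_fderiv (h.differentiableAt (by simp))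

theorem contDiffAt_pdr2 {k : ℕ} (hf : ContDiffAt ℝ (k + 1) (uncurry f) q) :
    ContDiffAt ℝ k (uncurry (pdr2 f)) q :=
  (hf.fderiv_right_succ.clm_apply contDiffAt_const).congr_of_eventuallyEq
    (pdr2_eventuallyEq_fderiv (hf.of_le (by simp)))

theorem contDiffAt_pdz2 {k : ℕ} (hf : ContDiffAt ℝ (k + 1) (uncurry f) q) :
    ContDiffAt ℝ k (uncurry (pdz2 f)) q :=
  (hf.fderiv_right_succ.clm_apply contDiffAt_const).congr_of_eventuallyEq
    (pdz2_eventuallyEq_fderiv (hf.of_le (by simp)))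

theorem pdz2_pdr2_comm (hf : ContDiffAt ℝ 2 (uncurry f) q) :
    pdz2 (pdr2 f) q.1 q.2 = pdr2 (pdz2 f) q.1 q.2 := by
  have hf₁ : ContDiffAt ℝ 1 (uncurry f) q := hf.of_le one_le_two
  have hd : DifferentiableAt ℝ (fderiv ℝ (uncurry f)) q :=
    (hf.fderiv_right (m := 1) (by norm_num)).differentiableAt one_ne_zero
  have hr := contDiffAt_pdr2 (k := 1) (by simpa [one_add_one_eq_two] using hf)
  have hz := contDiffAt_pdz2 (k := 1) (by simpa [one_add_one_eq_two] using hf)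
  rw [pdz2_eq_fderiv (hr.differentiableAt (by simp)),
    pdr2_eq_fderiv (hz.differentiableAt (by simp)),
    (pdr2_eventuallyEq_fderiv hf₁).fderiv_eq, (pdz2_eventuallyEq_fderiv hf₁).fderiv_eq,
    fderiv_clm_apply hd (differentiableAt_const _), fderiv_clm_apply hd (differentiableAt_const _)]
  simpa using (hf.isSymmSndFDerivAt (by simp)).eq (0, 1) (1, 0)

theorem pdr2_congr (hfh : uncurry f =ᶠ[𝓝 q] uncurry h) :
    uncurry (pdr2 f) =ᶠ[𝓝 q] uncurry (pdr2 h) := by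
  filter_upwards [hfh.eventuallyEq_nhds] with q hq
  exact EventuallyEq.deriv_eq
    (((Continuous.prodMk_left q.2).tendsto q.1).eventually hq)

theorem pdz2_congr (hfh : uncurry f =ᶠ[𝓝 q] uncurry h) :
    uncurry (pdz2 f) =ᶠ[𝓝 q] uncurry (pdz2 h) := by
  filter_upwards [hfh.eventuallyEq_nhds] with q hq
  exact EventuallyEq.deriv_eq
    (((Continuous.prodMk_right q.1).tendsto q.2).eventually hq)

theorem iterate_pdr2_congr (hfh : uncurry f =ᶠ[𝓝 q] uncurry h) (i : ℕ) :
    uncurry (pdr2^[i] f) =ᶠ[𝓝 q] uncurry (pdr2^[i] h) := by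
  induction i generalizing f h with
  | zero => exact hfh
  | succ _ ih => exact ih (pdr2_congr hfh)

theorem iterate_pdz2_congr (hfh : uncurry f =ᶠ[𝓝 q] uncurry h) (j : ℕ) :
    uncurry (pdz2^[j] f) =ᶠ[𝓝 q] uncurry (pdz2^[j] h) := by
  induction j generalizing f h with
  | zero => exact hfh
  | succ _ ih => exact ih (pdz2_congr hfh)

theorem iterate_pdz2_pdr2_comm {j : ℕ} (hf : ContDiffAt ℝ (j + 1) (uncurry f) q) :
    uncurry (pdz2^[j] (pdr2 f)) =ᶠ[𝓝 q] uncurry (pdr2 (pdz2^[j] f)) := by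
  induction j generalizing f with
  | zero => rfl
  | succ j ih =>
    have hcomm : uncurry (pdz2 (pdr2 f)) =ᶠ[𝓝 q] uncurry (pdr2 (pdz2 f)) :=
      ((hf.of_le (m := 2) (by norm_cast; lia)).eventually (by simp)).mono
        fun _ h => pdz2_pdr2_comm h
    exact (iterate_pdz2_congr hcomm j).trans (ih (contDiffAt_pdz2 (mod_cast hf)))

theorem hasFDerivAt_radius_cosTheta {P : Pt} (hf : DifferentiableAt ℝ (uncurry f) (P 1, P 2)) :
    HasFDerivAt (fun P : Pt => f (P 1) (P 2))
      (drdz (pdr2 f (P 1) (P 2)) (pdz2 f (P 1) (P 2))) P := by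
  refine (HasFDerivAt.comp (g := uncurry f) (f := fun P : Pt => (P 1, P 2)) P hf.hasFDerivAt
    ((hasFDerivAt_apply 1 P).prodMk (hasFDerivAt_apply 2 P))).congr_fderiv ?_
  rw [pdr2_eq_fderiv hf, pdz2_eq_fderiv hf]
  ext v
  simp [drdz, ← map_smul, ← map_add]

theorem pdr2_eq_of_hasFDerivAt {P : Pt} {u v : ℂ}
    (hf : HasFDerivAt (fun P : Pt => f (P 1) (P 2)) (drdz u v) P) : pdr2 f (P 1) (P 2) = u := by
  have := hf.comp_hasDerivAt_of_eq (P 1) (hasDerivAt_update P 1 (P 1)) (by simp)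
  simpa [drdz, Function.comp_def, pdr2, pdz2] using this.deriv

theorem pdz2_eq_of_hasFDerivAt {P : Pt} {u v : ℂ}
    (hf : HasFDerivAt (fun P : Pt => f (P 1) (P 2)) (drdz u v) P) : pdz2 f (P 1) (P 2) = v := by
  have := hf.comp_hasDerivAt_of_eq (P 2) (hasDerivAt_update P 2 (P 2)) (by simp)
  simpa [drdz, Function.comp_def, pdr2, pdz2] using this.deriv

end PartialDerivatives

section Symbols

variable {c c' k : ℕ} {p : ℤ} {f : ℝ → ℝ → ℂ}

open Function (uncurry)

theorem IsSymbol.pdr2 {e : ℤ} (hf : IsSymbol c (k + 1) p e fun P => f (P 1) (P 2)) :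
    IsSymbol c k (p - 1) e fun P => pdr2 f (P 1) (P 2) := by
  obtain ⟨-, f₁, f₂, hdf, h₁, -⟩ := hf
  exact h₁.congr (hdf.mono fun P hP => pdr2_eq_of_hasFDerivAt hP)

theorem IsSymbol.pdz2 {e : ℤ} (hf : IsSymbol c (k + 1) p e fun P => f (P 1) (P 2)) :
    IsSymbol c k p (e - c) fun P => pdz2 f (P 1) (P 2) := by
  obtain ⟨-, f₁, f₂, hdf, -, h₂⟩ := hf
  exact h₂.congr (hdf.mono fun P hP => pdz2_eq_of_hasFDerivAt hP)

theorem IsGradedSymbol.mono_cost {E : Type*} [NormedAddCommGroup E] [NormedSpace ℝ E]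
    {q : ℕ → ℤ} {f : Pt → E} (hf : IsGradedSymbol c k p q f) (hc : c ≤ c') :
    IsGradedSymbol c' k p q f := by
  induction k generalizing p q f with
  | zero => exact hf
  | succ k ih =>
    obtain ⟨h₀, f₁, f₂, hdf, h₁, h₂⟩ := hf
    exact ⟨h₀, f₁, f₂, hdf, ih h₁, (ih h₂).mono le_rfl fun i _ => by lia⟩

theorem isSymbol_of_hasWeight_iterate
    (hf : ∀ᶠ P in farField, ContDiffAt ℝ k (uncurry f) (P 1, P 2))
    (hb : ∀ i j : ℕ, i + j ≤ k → HasWeight (p - i) 0 fun P => pdr2^[i] (pdz2^[j] f) (P 1) (P 2)) :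
    IsSymbol 0 k p 0 fun P => f (P 1) (P 2) := by
  induction k generalizing p f with
  | zero =>
    have h₀ : HasWeight p 0 fun P => f (P 1) (P 2) := by simpa using hb 0 0 le_rfl
    exact h₀
  | succ k ih =>
    refine ⟨by simpa using hb 0 0 (by lia), _, _,
      hf.mono fun P hP => hasFDerivAt_radius_cosTheta (hP.differentiableAt (by simp)),
      ih (hf.mono fun P hP => contDiffAt_pdr2 (mod_cast hP)) fun i j hij => ?_,
      ih (hf.mono fun P hP => contDiffAt_pdz2 (mod_cast hP)) fun i j hij => hb i (j + 1) (by lia)⟩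
    refine HasWeight.mono ((hb (i + 1) j (by lia)).congr' (hf.mono fun P hP => ?_) .rfl)
      (by push_cast; lia) le_rfl
    exact ((iterate_pdr2_congr (iterate_pdz2_pdr2_comm
      (hP.of_le (by norm_cast; lia))) i).eq_of_nhds).symm

theorem hasWeight_comp_cosTheta {g : ℝ → ℂ} (hg : ContinuousOn g (Set.Icc (-1) 1)) :
    HasWeight 0 0 fun P => g (P 2) := by
  obtain ⟨C, hC⟩ := isCompact_Icc.exists_bound_of_continuousOn hg
  refine .of_bound C (eventually_cosTheta_mem_Ioo.mono fun P hP => ?_)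
  simpa using hC _ (Set.Ioo_subset_Icc_self hP)

theorem isSymbol_comp_cosTheta {g : ℝ → ℂ} (hg : ContDiffOn ℝ k g (Set.Icc (-1) 1)) :
    IsSymbol 0 k 0 0 fun P => g (P 2) := by
  induction k generalizing g with
  | zero => exact hasWeight_comp_cosTheta hg.continuousOn
  | succ k ih =>
    let g' : ℝ → ℂ := derivWithin g (Set.Icc (-1) 1)
    have hg' : ContDiffOn ℝ k g' (Set.Icc (-1) 1) :=
      hg.derivWithin (uniqueDiffOn_Icc (by norm_num)) (by simp)
    refine ⟨hasWeight_comp_cosTheta hg.continuousOn, 0, fun P => g' (P 2),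
      eventually_cosTheta_mem_Ioo.mono fun P hP => ?_, isGradedSymbol_zero, by simpa using ih hg'⟩
    have hderiv : HasDerivAt g (g' (P 2)) (P 2) :=
      (hg.differentiableOn (by simp) _ (Set.Ioo_subset_Icc_self hP)).hasDerivWithinAt.hasDerivAt
        (Icc_mem_nhds hP.1 hP.2)
    exact (hderiv.hasFDerivAt.comp P (hasFDerivAt_cosTheta P)).congr_fderiv (by ext; simp [drdz])

theorem isSymbol_radius_zpow (n : ℤ) : IsSymbol c k n 0 fun P => (P 1 : ℂ) ^ n := by
  have hb (n : ℤ) : HasWeight n 0 fun P => (P 1 : ℂ) ^ n :=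
    .of_bound' (.of_forall fun P => by simp)
  induction k generalizing n with
  | zero => exact hb n
  | succ k ih =>
    refine ⟨hb n, fun P => n * (P 1 : ℂ) ^ (n - 1), fun _ => 0, ?_, (ih (n - 1)).const_mul _,
      isGradedSymbol_zero⟩
    filter_upwards [eventually_radius_gt 0] with P hP
    have hderiv : HasDerivAt (fun r : ℝ => (r : ℂ) ^ n) (n * (P 1 : ℂ) ^ (n - 1)) (P 1) :=
      (hasDerivAt_zpow n (P 1 : ℂ) (.inl (mod_cast hP.ne'))).comp_ofReal
    refine (hderiv.hasFDerivAt.comp P (hasFDerivAt_radius P)).congr_fderiv ?_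
    ext
    simp [drdz]

theorem isSymbol_of_leading_term {Φ₀ : ℝ → ℂ} {n : ℤ}
    (hψ : ∀ᶠ P in farField, ContDiffAt ℝ k (uncurry f) (P 1, P 2))
    (hΦ₀ : ContDiffOn ℝ k Φ₀ (Set.Icc (-1) 1))
    (hfall : ∀ i j : ℕ, i + j ≤ k → HasWeight (n - 1 - i) 0
      fun P => pdr2^[i] (pdz2^[j] fun r z => f r z - Φ₀ z * (r : ℂ) ^ n) (P 1) (P 2)) :
    IsSymbol 0 k n 0 fun P => f (P 1) (P 2) := by
  have hrem : IsSymbol 0 k (n - 1) 0 fun P => f (P 1) (P 2) - Φ₀ (P 2) * (P 1 : ℂ) ^ n := by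
    refine isSymbol_of_hasWeight_iterate (f := fun r z => f r z - Φ₀ z * (r : ℂ) ^ n) ?_ hfall
    filter_upwards [hψ, eventually_radius_gt 0, eventually_cosTheta_mem_Ioo] with P hψ hr hz
    refine hψ.sub (.mul ?_ ?_)
    · exact (hΦ₀.contDiffAt (Icc_mem_nhds hz.1 hz.2)).comp (P 1, P 2) contDiffAt_snd
    · have hr₀ : (P 1 : ℂ) ≠ 0 := mod_cast hr.ne'
      have hofReal : AnalyticAt ℝ (fun q : ℝ × ℝ => (q.1 : ℂ)) (P 1, P 2) :=
        (Complex.ofRealCLM.analyticAt _).comp analyticAt_fst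
      exact (hofReal.zpow hr₀).contDiffAt
  have hlead := (isSymbol_comp_cosTheta hΦ₀).mul (p'' := n) (e'' := 0) (isSymbol_radius_zpow n)
    (by simp)
  simpa using IsGradedSymbol.add (hrem.mono (by lia) le_rfl) hlead

end Symbols

/-! ### The gain from the Teukolsky equation -/

section Teukolsky

variable {a r z : ℝ} {s n : ℤ} {ψ : ℝ → ℝ → ℂ}

open Function (uncurry)

/-- The part of `𝒯_s` that is regular on the axis, i.e. `𝒯_s` without its angular potential. -/
def regularTeukSAS (a : ℝ) (s : ℤ) (ψ : ℝ → ℝ → ℂ) (r z : ℝ) : ℂ :=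
  Del a r * pdr2 (pdr2 ψ) r z + (s + 1) * (2 * r - 2) * pdr2 ψ r z
    + ((1 - z ^ 2) * pdz2 (pdz2 ψ) r z - 2 * z * pdz2 ψ r z)

theorem hasDerivAt_Del : HasDerivAt (Del a) (2 * r - 2) r :=
  (((hasDerivAt_id r).mul ((hasDerivAt_id r).sub_const 2)).add_const (a ^ 2)).congr_deriv
    (by simp; ring)

theorem teukSAS_eq_regularTeukSAS_sub (hψ : ContDiffAt ℝ 2 (uncurry ψ) (r, z))
    (hΔ : Del a r ≠ 0) :
    TeukSAS a s ψ r z = regularTeukSAS a s ψ r z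
      - (s * (s + 1) * (z : ℂ) ^ 2 - s) / (1 - (z : ℂ) ^ 2) * ψ r z := by
  have hΔ' : (Del a r : ℂ) ≠ 0 := mod_cast hΔ
  have hrr : HasDerivAt (fun r => pdr2 ψ r z) (pdr2 (pdr2 ψ) r z) r :=
    hasDerivAt_pdr2 (q := (r, z)) ((contDiffAt_pdr2 (k := 1) hψ).differentiableAt (by simp))
  have hzz : HasDerivAt (fun z => pdz2 ψ r z) (pdz2 (pdz2 ψ) r z) z :=
    hasDerivAt_pdz2 (q := (r, z)) ((contDiffAt_pdz2 (k := 1) hψ).differentiableAt (by simp))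
  have hpow : HasDerivAt (fun r => (Del a r : ℂ) ^ (s + 1))
      ((s + 1 : ℤ) * (Del a r : ℂ) ^ (s + 1 - 1) * (2 * r - 2 : ℝ)) r :=
    HasDerivAt.comp (h₂ := fun w : ℂ => w ^ (s + 1)) r
      (hasDerivAt_zpow (s + 1) (Del a r : ℂ) (.inl hΔ')) hasDerivAt_Del.ofReal_comp
  have hsin : HasDerivAt (fun z : ℝ => ((1 - z ^ 2 : ℝ) : ℂ)) ((-(2 * z) : ℝ) : ℂ) z :=
    HasDerivAt.ofReal_comp ((((hasDerivAt_id z).pow 2).const_sub 1).congr_deriv (by simp))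
  have hradial : deriv (fun r => (Del a r : ℂ) ^ (s + 1) * deriv (fun r => ψ r z) r) r = _ :=
    (hpow.mul hrr).deriv
  have hpolar : deriv (fun z : ℝ => ((1 - z ^ 2 : ℝ) : ℂ) * deriv (fun z => ψ r z) z) z = _ :=
    (hsin.mul hzz).deriv
  have hΔpow : (Del a r : ℂ) ^ s ≠ 0 := zpow_ne_zero s hΔ'
  simp only [TeukSAS, regularTeukSAS]
  rw [hradial, hpolar, zpow_neg, zpow_add₀ hΔ', zpow_one, add_sub_cancel_right]
  field_simp
  push_cast
  ring

theorem isSymbol_regularTeukSAS (hψ : IsSymbol 0 3 n 0 fun P => ψ (P 1) (P 2)) :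
    IsSymbol 0 1 n 0 fun P => regularTeukSAS a s ψ (P 1) (P 2) := by
  have hΔ : IsSymbol 0 1 2 0 fun P => (Del a (P 1) : ℂ) := (isSymbol_Del a).ofReal
  have hr : IsSymbol 0 1 1 0 fun P => (s + 1) * (2 * (P 1 : ℂ) - 2) := IsGradedSymbol.const_mul _
    ((isSymbol_radius.ofReal.const_mul 2).sub ((isSymbol_const 2).mono zero_le_one le_rfl))
  have hz : IsSymbol 0 1 0 0 fun P => (P 2 : ℂ) := isSymbol_cosTheta.ofReal
  have h2z : IsSymbol 0 1 0 0 fun P => 2 * (P 2 : ℂ) := hz.const_mul 2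
  have hsin : IsSymbol 0 1 0 0 fun P => 1 - (P 2 : ℂ) ^ 2 :=
    (isSymbol_const 1).sub (by simpa using hz.pow 2)
  exact ((hΔ.mul hψ.pdr2.pdr2 (by lia)).add (hr.mul hψ.pdr2.of_succ (by lia))).add
    ((hsin.mul hψ.pdz2.pdz2 (by lia)).sub (h2z.mul hψ.pdz2.of_succ (by lia)))

theorem isSymbol_of_teukSAS_eq_zero (hs : s ≠ 0) (hψ : IsSymbol 0 3 n 0 fun P => ψ (P 1) (P 2))
    (hψ' : ∀ᶠ P in farField, ContDiffAt ℝ 2 (uncurry ψ) (P 1, P 2))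
    (hteuk : ∀ᶠ P in farField, TeukSAS a s ψ (P 1) (P 2) = 0) :
    IsSymbol 2 1 n 2 fun P => ψ (P 1) (P 2) := by
  let χ (P : Pt) : ℂ := ((s : ℂ) ^ 2)⁻¹ *
    (s * (s + 1) * ψ (P 1) (P 2) + regularTeukSAS a s ψ (P 1) (P 2))
  have hχ : IsSymbol 0 1 n 0 χ := IsGradedSymbol.const_mul _
    (((hψ.of_le (by lia)).const_mul _).add (isSymbol_regularTeukSAS hψ))
  refine IsGradedSymbol.congr (IsSymbol.mul (p'' := n) (e'' := 2)
    isSymbol_one_sub_sq.ofReal (hχ.mono_cost zero_le_two) (by simp)) ?_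
  filter_upwards [hψ', hteuk, eventually_radius_gt 2, eventually_cosTheta_mem_Ioo]
    with P hψ' hteuk hr hz
  rw [teukSAS_eq_regularTeukSAS_sub hψ' (Del_pos a hr).ne'] at hteuk
  have hw : (1 - (P 2 : ℂ) ^ 2) ≠ 0 := mod_cast (one_sub_sq_pos hz).ne'
  have hs' : (s : ℂ) ≠ 0 := mod_cast hs
  simp only [χ]
  push_cast
  field_simp at hteuk ⊢
  linear_combination -hteuk

theorem isGradedSymbol_hertzSeq {f : Pt → ℂ} (h : IsSymbol 0 3 n 0 f) (h' : IsSymbol 2 1 n 2 f) :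
    IsGradedSymbol 2 3 n hertzSeq f := by
  obtain ⟨-, f₁, f₂, hd, ⟨-, f₁₁, f₁₂, hd₁, h₁₁, h₁₂⟩, h₂⟩ := h
  have hf₁ : HasWeight (n - 1) 2 f₁ :=
    h'.radialDeriv.hasWeight.congr' (hd.mono fun P hP => by simp [hP.fderiv, drdz]) .rfl
  refine ⟨h'.hasWeight, f₁, f₂, hd, ⟨hf₁, f₁₁, f₁₂, hd₁,
    (h₁₁.mono_cost zero_le_two).mono le_rfl ?_, (h₁₂.mono_cost zero_le_two).mono le_rfl ?_⟩,
    (h₂.mono_cost zero_le_two).mono le_rfl ?_⟩ <;>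
  · intro i _
    simp only [hertzSeq]
    split_ifs
    all_goals lia

end Teukolsky

/-! ### Decay of the charge -/

section Charge

variable {a x y : ℝ} {h : Pt → Matrix (Fin 4) (Fin 4) ℝ}

-- On the axis the chart degenerates to `det g = 0`, and `gInv` takes the junk value `0`.
theorem gInv_eq_zero_of_sq_eq_one {P : Pt} (hz : P 2 ^ 2 = 1) : gInv a P = 0 := by
  have hdet : (g a P).det = 0 :=
    Matrix.det_eq_zero_of_row_eq_zero 2 fun j => by fin_cases j <;> simp [g, gFam, hz]
  exact Matrix.nonsing_inv_apply_not_isUnit _ (by simp [hdet])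

theorem Fdens_eq_zero_of_sq_eq_one {P : Pt} (hz : P 2 ^ 2 = 1) : Fdens a h x y P = 0 := by
  simp [Fdens, ADformUp, gInv_eq_zero_of_sq_eq_one hz]

theorem exists_abs_Fdens_le_div (hF : HasWeight (-1) 0 (Fdens a h x y)) (R₀ : ℝ) :
    ∃ C R : ℝ, 0 < C ∧ R₀ < R ∧ ∀ t φ r z : ℝ, R < r → -1 ≤ z → z ≤ 1 →
      |Fdens a h x y ![t, r, z, φ]| ≤ C / r := by
  obtain ⟨C, hC, hbound⟩ := hF.exists_pos
  obtain ⟨R, hR⟩ := eventually_farField.1 hbound.bound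
  refine ⟨C, max (max R (R₀ + 1)) 0, hC, by simp, fun t φ r z hr h₁ h₂ => ?_⟩
  obtain ⟨⟨hr₁, -⟩, hr₀⟩ : (R < r ∧ R₀ + 1 < r) ∧ 0 < r := by simpa using hr
  rcases eq_or_lt_of_le (sq_le_one_iff_abs_le_one z |>.2 (abs_le.2 ⟨h₁, h₂⟩)) with hz | hz
  · rw [Fdens_eq_zero_of_sq_eq_one (by simpa using hz), abs_zero]
    positivity
  · have := hR ![t, r, z, φ] (by simpa using hr₁) (by simpa [abs_lt] using hz)
    simpa [abs_of_pos hr₀, div_eq_mul_inv] using this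

theorem tendsto_ADcharge_of_abs_Fdens_le_div {C R t : ℝ}
    (hF : ∀ φ r z : ℝ, R < r → -1 ≤ z → z ≤ 1 → |Fdens a h x y ![t, r, z, φ]| ≤ C / r) :
    Tendsto (fun r => ADcharge a h x y t r) atTop (𝓝 0) := by
  have hlim : Tendsto (fun r : ℝ => C / r * |1 - (-1)| * |2 * Real.pi - 0|) atTop (𝓝 0) := by
    have hdiv : Tendsto (fun r : ℝ => C / r) atTop (𝓝 0) := tendsto_id.const_div_atTop C
    simpa only [zero_mul] using (hdiv.mul_const |1 - (-1)|).mul_const |2 * Real.pi - 0|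
  refine squeeze_zero_norm' ?_ hlim
  filter_upwards [eventually_gt_atTop R] with r hr
  refine intervalIntegral.norm_integral_le_of_norm_le_const fun φ _ =>
    intervalIntegral.norm_integral_le_of_norm_le_const fun z hz => ?_
  rw [Set.uIoc_of_le (by norm_num)] at hz
  exact hF φ r z hr hz.1.le hz.2

end Charge

theorem isTensorSymbol_hCCK {a : ℝ} {s n : ℤ} {Φ : Pt → ℂ} (hs : s = 2 ∨ s = -2)
    (hn : n = if s = -2 then -1 else -5) (hΦ : IsGradedSymbol 2 3 n hertzSeq Φ) :
    IsTensorSymbol (-3) (hCCK a s Φ) := by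
  rcases hs with rfl | rfl <;> norm_num at hn <;> subst hn
  exacts [isTensorSymbol_hCCK_two hΦ, isTensorSymbol_hCCK_neg_two hΦ]

theorem isGradedSymbol_hertzSeq_of_teukSAS_eq_zero {a R₀ C : ℝ} {s n : ℤ} {ψ : ℝ → ℝ → ℂ}
    {Φ₀ : ℝ → ℂ} (hs : s ≠ 0)
    (hψ : ContDiffOn ℝ 3 (fun q : ℝ × ℝ => ψ q.1 q.2) (Set.Ioi R₀ ×ˢ Set.Ioo (-1) 1))
    (hteuk : ∀ r z, R₀ < r → z ∈ Set.Ioo (-1) 1 → TeukSAS a s ψ r z = 0)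
    (hΦ₀ : ContDiffOn ℝ 3 Φ₀ (Set.Icc (-1) 1))
    (hfall : ∀ i j : ℕ, i + j ≤ 3 → ∀ r z : ℝ, R₀ < r → z ∈ Set.Ioo (-1) 1 →
      ‖(pdr2^[i] (pdz2^[j] (fun r' z' => ψ r' z' - Φ₀ z' * (r' : ℂ) ^ n))) r z‖
        ≤ C * r ^ (n - 1 - (i : ℤ))) :
    IsGradedSymbol 2 3 n hertzSeq fun P => ψ (P 1) (P 2) := by
  have hψ₃ : ∀ᶠ P in farField, ContDiffAt ℝ 3 (Function.uncurry ψ) (P 1, P 2) :=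
    eventually_farField.2 ⟨R₀, fun P hr hz =>
      hψ.contDiffAt (prod_mem_nhds (Ioi_mem_nhds hr) (Ioo_mem_nhds hz.1 hz.2))⟩
  have hbound (i j : ℕ) (hij : i + j ≤ 3) : HasWeight (n - 1 - i) 0 fun P =>
      (pdr2^[i] (pdz2^[j] fun r z => ψ r z - Φ₀ z * (r : ℂ) ^ n)) (P 1) (P 2) := by
    refine .of_bound C ?_
    filter_upwards [eventually_radius_gt 0, eventually_radius_gt R₀, eventually_cosTheta_mem_Ioo]
      with P hr₀ hr hz
    simpa [abs_of_pos hr₀] using hfall i j hij _ _ hr hz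
  have hsymbol := isSymbol_of_leading_term (k := 3) hψ₃ hΦ₀ hbound
  exact isGradedSymbol_hertzSeq hsymbol <| isSymbol_of_teukSAS_eq_zero hs hsymbol
    (hψ₃.mono fun P hP => hP.of_le (by norm_num))
    (eventually_farField.2 ⟨R₀, fun P => hteuk _ _⟩)

theorem AD_density_large_radius_general (a R₀ : ℝ) (s : ℤ) (hs : s = 2 ∨ s = -2)
    (ψ : ℝ → ℝ → ℂ) (Φ₀ : ℝ → ℂ)
    (hψ : ContDiffOn ℝ 3 (fun q : ℝ × ℝ => ψ q.1 q.2) (Set.Ioi R₀ ×ˢ Set.Ioo (-1) 1))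
    (hteuk : ∀ r z, R₀ < r → z ∈ Set.Ioo (-1) 1 → TeukSAS a s ψ r z = 0)
    (hΦ₀ : ContDiffOn ℝ 3 Φ₀ (Set.Icc (-1) 1))
    (n : ℤ) (hn : n = if s = -2 then -1 else -5) (C : ℝ)
    (hfall : ∀ i j : ℕ, i + j ≤ 3 → ∀ r z : ℝ, R₀ < r → z ∈ Set.Ioo (-1) 1 →
      ‖(pdr2^[i] (pdz2^[j] (fun r' z' => ψ r' z' - Φ₀ z' * (r' : ℂ) ^ n))) r z‖
        ≤ C * r ^ (n - 1 - (i : ℤ))) (x y : ℝ) :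
    (∃ C R : ℝ, 0 < C ∧ R₀ < R ∧ ∀ t φ r z : ℝ, R < r → -1 ≤ z → z ≤ 1 →
      |Fdens a (hCCK a s (fun p => ψ (p 1) (p 2))) x y ![t, r, z, φ]| ≤ C / r) ∧
    ∀ t : ℝ, Tendsto (fun r => ADcharge a (hCCK a s (fun p => ψ (p 1) (p 2))) x y t r)
      atTop (𝓝 0) := by
  have hΦ : IsGradedSymbol 2 3 n hertzSeq fun P => ψ (P 1) (P 2) :=
    isGradedSymbol_hertzSeq_of_teukSAS_eq_zero (by lia) hψ hteuk hΦ₀ hfall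
  have hF : HasWeight (-1) 0 (Fdens a (hCCK a s fun p => ψ (p 1) (p 2)) x y) :=
    (isTensorSymbol_hCCK hs hn hΦ).hasWeight_Fdens a x y
  obtain ⟨C, R, hC, hR, hbound⟩ := exists_abs_Fdens_le_div hF R₀
  exact ⟨⟨C, R, hC, hR, hbound⟩, fun t => tendsto_ADcharge_of_abs_Fdens_le_div (hbound t)⟩

/-- **Large-radius fall-off of the Abbott–Deser charge density.**  For an infinity-regular
stationary axisymmetric solution `ψ` of `𝒯_s ψ = 0`, the charge density
`ℱ[k] := Σ F^{rt}[h^{CCK}[s,ψ],k]` is `O(r^{−1})` as `r → ∞`, uniformly in `z`;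
consequently `Q[h^{CCK}[s,ψ],k,S_{t,r}] → 0` as `r → ∞`. -/
theorem AD_density_large_radius (a : ℝ) (ha : |a| < 1) (s : ℤ) (hs : s = 2 ∨ s = -2)
    (ψ : ℝ → ℝ → ℂ) (Φ₀ : ℝ → ℂ)
    (hψ : ContDiffOn ℝ (⊤ : ℕ∞) (fun q : ℝ × ℝ => ψ q.1 q.2) (U2cl a))
    (hteuk : ∀ q ∈ U2 a, TeukSAS a s ψ q.1 q.2 = 0)
    (hΦ₀ : ContDiffOn ℝ (⊤ : ℕ∞) Φ₀ (Set.Icc (-1 : ℝ) 1))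
    (n : ℤ) (hn : n = if s = -2 then -1 else -5)
    (hfall : ∃ C R : ℝ, 0 < C ∧ rplus a < R ∧ ∀ i j : ℕ, i + j ≤ 3 →
      ∀ r z : ℝ, R < r → z ∈ Set.Icc (-1 : ℝ) 1 →
        ‖(pdr2^[i] (pdz2^[j] (fun r' z' => ψ r' z' - Φ₀ z' * (r' : ℂ) ^ n))) r z‖
          ≤ C * r ^ (n - 1 - (i : ℤ))) :
    ∀ x y : ℝ,
      (∃ C R : ℝ, 0 < C ∧ rplus a < R ∧ ∀ t φv r z : ℝ, R < r → -1 ≤ z → z ≤ 1 →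
        |Fdens a (hCCK a s (fun p => ψ (p 1) (p 2))) x y ![t, r, z, φv]| ≤ C / r) ∧
      (∀ t : ℝ, Tendsto (fun r => ADcharge a (hCCK a s (fun p => ψ (p 1) (p 2))) x y t r)
        atTop (nhds 0)) := by
  obtain ⟨C, R, -, hR, hbound⟩ := hfall
  intro x y
  obtain ⟨⟨C', R', hC', hR', hdecay⟩, hcharge⟩ := AD_density_large_radius_general a R s hs ψ Φ₀
    ((hψ.mono fun q hq => ⟨hR.trans hq.1, hq.2.1.le, hq.2.2.le⟩).of_le ENat.LEInfty.out)
    (fun r z hr hz => hteuk (r, z) ⟨hR.trans hr, hz⟩) (hΦ₀.of_le ENat.LEInfty.out) n hn C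
    (fun i j hij r z hr hz => hbound i j hij r z hr (Set.Ioo_subset_Icc_self hz)) x y
  exact ⟨⟨C', R', hC', hR.trans hR', hdecay⟩, hcharge⟩

end Kerr
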